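/- Every triconnected planar simple graph with maximum degree at most 6 admits a planar octilinear drawing in which every edge has at most two bends. -/

import Mathlib

/-!
Common definitions: polylines, octilinear drawings, planarity, triconnectivity.
-/

/-- A polyline: a sequence of `len + 1` points `pt 0, pt 1, …, pt len`,
consisting of `len ≥ 1` segments. (Values of `pt` beyond `len` are irrelevant.) -/
structure Polyline where
  len : ℕ
  len_pos : 1 ≤ len
  pt : ℕ → ℝ × ℝ

namespace Polyline

/-- The number of bends of a polyline (its interior points `pt 1, …, pt (len-1)`). -/
def bends (P : Polyline) : ℕ := P.len - 1

/-- Piecewise-linear parametrization of the polyline on the interval `[0, len]`. -/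
noncomputable def param (P : Polyline) (s : ℝ) : ℝ × ℝ :=
  P.pt ⌊s⌋.toNat + (s - (⌊s⌋.toNat : ℝ)) • (P.pt (⌊s⌋.toNat + 1) - P.pt ⌊s⌋.toNat)

/-- The image (trace) of the polyline in the plane. -/
noncomputable def image (P : Polyline) : Set (ℝ × ℝ) :=
  P.param '' Set.Icc 0 (P.len : ℝ)

/-- The polyline is a simple curve. -/
def Simple (P : Polyline) : Prop :=
  Set.InjOn P.param (Set.Icc 0 (P.len : ℝ))

/-- Every segment is nondegenerate, and no two consecutive segments are collinear. -/
def Proper (P : Polyline) : Prop :=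
  (∀ i < P.len, P.pt i ≠ P.pt (i + 1)) ∧
  (∀ i, i + 1 < P.len → ¬ Collinear ℝ ({P.pt i, P.pt (i + 1), P.pt (i + 2)} : Set (ℝ × ℝ)))

/-- The segment from `a` to `b` is horizontal, vertical, or diagonal at `45°`. -/
def OctiSeg (a b : ℝ × ℝ) : Prop :=
  b.2 - a.2 = 0 ∨ b.1 - a.1 = 0 ∨ b.2 - a.2 = b.1 - a.1 ∨ b.2 - a.2 = -(b.1 - a.1)

/-- The polyline is octilinear: proper, with all segments in octilinear directions. -/
def Octilinear (P : Polyline) : Prop :=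
  P.Proper ∧ ∀ i < P.len, OctiSeg (P.pt i) (P.pt (i + 1))

end Polyline

/-- Embedding of the integer grid into the real plane. -/
def toR (p : ℤ × ℤ) : ℝ × ℝ := ((p.1 : ℝ), (p.2 : ℝ))

/-- A polyline drawing of a simple graph `G` in the plane:
an injective placement of the vertices and, for each edge, a polyline whose
endpoints are the points of the edge's endvertices, with nondegenerate segments
and no two consecutive segments collinear. -/
structure PolyDrawing {V : Type*} (G : SimpleGraph V) where
  pos : V → ℝ × ℝ
  inj : Function.Injective pos
  poly : Sym2 V → Polyline
  ends : ∀ u v, G.Adj u v →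
    ({(poly s(u, v)).pt 0, (poly s(u, v)).pt (poly s(u, v)).len} : Set (ℝ × ℝ)) =
      {pos u, pos v}
  proper : ∀ e ∈ G.edgeSet, (poly e).Proper

/-- A polyline drawing is planar: every edge-polyline is a simple curve meeting the
vertex points exactly in its two endpoints, and polylines of distinct edges intersect
only in images of common endvertices. -/
def PolyDrawing.IsPlanar {V : Type*} {G : SimpleGraph V} (D : PolyDrawing G) : Prop :=
  (∀ e ∈ G.edgeSet, (D.poly e).Simple) ∧
  (∀ u v, G.Adj u v →
    (D.poly s(u, v)).image ∩ Set.range D.pos = {D.pos u, D.pos v}) ∧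
  (∀ e ∈ G.edgeSet, ∀ e' ∈ G.edgeSet, e ≠ e' →
    (D.poly e).image ∩ (D.poly e').image ⊆ D.pos '' {w | w ∈ e ∧ w ∈ e'})

/-- A simple graph is planar if it admits a planar polyline drawing in `ℝ²`. -/
def GraphPlanar {V : Type*} (G : SimpleGraph V) : Prop :=
  ∃ D : PolyDrawing G, D.IsPlanar

/-- An octilinear drawing of a simple graph `G`: vertices are placed injectively on the
integer grid and each edge is drawn as an octilinear polyline between its endvertices. -/
structure OctiDrawing {V : Type*} (G : SimpleGraph V) where
  pos : V → ℤ × ℤ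
  inj : Function.Injective pos
  poly : Sym2 V → Polyline
  ends : ∀ u v, G.Adj u v →
    ({(poly s(u, v)).pt 0, (poly s(u, v)).pt (poly s(u, v)).len} : Set (ℝ × ℝ)) =
      {toR (pos u), toR (pos v)}
  octi : ∀ e ∈ G.edgeSet, (poly e).Octilinear

/-- An octilinear drawing is planar: every edge-polyline is a simple curve meeting the
vertex points exactly in its two endpoints, and polylines of distinct edges intersect
only in images of common endvertices. -/
def OctiDrawing.IsPlanar {V : Type*} {G : SimpleGraph V} (D : OctiDrawing G) : Prop :=
  (∀ e ∈ G.edgeSet, (D.poly e).Simple) ∧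
  (∀ u v, G.Adj u v →
    (D.poly s(u, v)).image ∩ Set.range (fun w => toR (D.pos w)) =
      {toR (D.pos u), toR (D.pos v)}) ∧
  (∀ e ∈ G.edgeSet, ∀ e' ∈ G.edgeSet, e ≠ e' →
    (D.poly e).image ∩ (D.poly e').image ⊆
      (fun w => toR (D.pos w)) '' {w | w ∈ e ∧ w ∈ e'})

/-- The total number of bends of an octilinear drawing. -/
noncomputable def OctiDrawing.totalBends {V : Type*} [Fintype V] {G : SimpleGraph V}
    (D : OctiDrawing G) : ℕ :=
  ∑ e ∈ G.edgeSet.toFinite.toFinset, (D.poly e).bends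

/-- The union of the images of the polylines of a set `S` of edges. -/
noncomputable def edgesImage {V : Type*} {G : SimpleGraph V} (D : OctiDrawing G)
    (S : Set (Sym2 V)) : Set (ℝ × ℝ) :=
  ⋃ e ∈ S, (D.poly e).image

/-- The interior (in the drawing `D`) of the closed curve formed by the edges in `S`:
the union of the bounded connected components of the complement of the curve. -/
noncomputable def interiorOf {V : Type*} {G : SimpleGraph V} (D : OctiDrawing G)
    (S : Set (Sym2 V)) : Set (ℝ × ℝ) :=
  {z | z ∉ edgesImage D S ∧ Bornology.IsBounded (connectedComponentIn (edgesImage D S)ᶜ z)}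

/-- A graph is triconnected if it has at least `4` vertices and deleting
any at most `2` vertices leaves it connected. -/
def Triconnected {V : Type*} [Fintype V] (G : SimpleGraph V) : Prop :=
  4 ≤ Fintype.card V ∧ ∀ S : Set V, S.ncard ≤ 2 → (G.induce Sᶜ).Connected

/-- The maximum degree of `G` is at most `k`. -/
def MaxDegLE {V : Type*} (G : SimpleGraph V) (k : ℕ) : Prop :=
  ∀ v, (G.neighborSet v).ncard ≤ k

/-!
An st-numbering, which exists for every choice of the edge `st` once the graph is biconnected,
orients all edges upwards. Draw every vertex at a height proportional to its number and every edge
as a stub at its lower end, a vertical segment and a stub at its upper end, where a stub is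
horizontal, diagonal or degenerate; such an edge has at most two bends. What is needed is a
left-to-right order of the vertical segments and, at every vertex, an assignment of the eight
directions (ports) to its edges that respects this order.

The order is extracted from a plane drawing by counting crossings modulo 2 instead of using the
Jordan curve theorem. Cut the drawing into segments and shear it so that none is horizontal. For a
closed mod-2 chain of edges, the parity of the number of chain segments to the right of a point is
constant along every edge outside the chain, and near a vertex it is determined by the rotation
there. It vanishes near the lowest point of the drawing on the rightmost segment; the edge `e₀`
containing this segment is chosen as `st`. Close an edge `e` to a cycle by a descending path to `s`,
an ascending path to `t`, and `e₀`: an edge `e'` is to the left or right of `e` according to its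
parity with respect to this cycle. On the edges crossing a given level this is a strict total order,
in which all edges at a vertex are on the same side of every edge passing that vertex.

The incoming edges of a vertex are spread around its downward port and the outgoing ones around its
upward port. As the degree is at most six, the two families do not compete for a port. Integer
abscissas are then built from bottom to top, each vertex being placed above its central incoming
edge. If the levels are far apart compared with the abscissas, the stubs at different vertices lie
in disjoint horizontal bands, and the drawing is planar.
-/

/-! ### Crossing parities in a family of segments -/

section Iverson

open Classical in
/-- The Iverson bracket of a proposition, with values in `ZMod 2`. -/
noncomputable def iverson (p : Prop) : ZMod 2 := if p then 1 else 0

theorem iverson_true {p : Prop} (h : p) : iverson p = 1 := if_pos h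

theorem iverson_false {p : Prop} (h : ¬ p) : iverson p = 0 := if_neg h

end Iverson

/-- A finite set of plane segments meeting only in endpoints, and whose endpoints (nodes) have
distinct heights. Segment `i` is the graph of the affine function `X i` of the height, restricted
to `[lo i, hi i]`; a node is identified with its height `y`, and `nodeX y` is its abscissa. -/
structure SegmentFamily (ι : Type*) where
  lo : ι → ℝ
  hi : ι → ℝ
  slope : ι → ℝ
  X : ι → ℝ → ℝ
  nodeX : ℝ → ℝ
  lo_lt_hi : ∀ i, lo i < hi i
  X_sub : ∀ i y y', X i y' - X i y = slope i * (y' - y)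
  X_lo : ∀ i, X i (lo i) = nodeX (lo i)
  X_hi : ∀ i, X i (hi i) = nodeX (hi i)
  X_ne : ∀ i j y, i ≠ j → y ∈ Set.Ioo (lo i) (hi i) → y ∈ Set.Icc (lo j) (hi j) → X i y ≠ X j y

namespace SegmentFamily

open Finset

variable {ι : Type*} (S : SegmentFamily ι) {g z : ι} {y : ℝ}

/-- The node at height `y` is an endpoint of the segment `z`. -/
def IsNode (z : ι) (y : ℝ) : Prop := y = S.lo z ∨ y = S.hi z

/-- Segment `g` passes to the left of segment `z` at some height interior to both. By
`leftOf_iff` the choice of this height does not matter. -/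
def LeftOf (g z : ι) : Prop :=
  ∃ y ∈ Set.Ioo (S.lo g) (S.hi g) ∩ Set.Ioo (S.lo z) (S.hi z), S.X g y < S.X z y

/-- The mirror image of the family in the horizontal axis. -/
def reflect : SegmentFamily ι where
  lo i := -S.hi i
  hi i := -S.lo i
  slope i := -S.slope i
  X i y := S.X i (-y)
  nodeX y := S.nodeX (-y)
  lo_lt_hi i := neg_lt_neg (S.lo_lt_hi i)
  X_sub i y y' := by rw [S.X_sub]; ring
  X_lo i := by rw [neg_neg, S.X_hi]
  X_hi i := by rw [neg_neg, S.X_lo]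
  X_ne i j y hij hi hj := S.X_ne i j (-y) hij
    ⟨lt_neg.1 hi.2, neg_lt.1 hi.1⟩ ⟨le_neg.1 hj.2, neg_le.1 hj.1⟩

theorem isNode_reflect : S.reflect.IsNode z y ↔ S.IsNode z (-y) := by
  simp only [IsNode, reflect, neg_eq_iff_eq_neg, or_comm]

theorem LeftOf.reflect (h : S.LeftOf g z) : S.reflect.LeftOf g z := by
  obtain ⟨y, ⟨hg, hz⟩, hlt⟩ := h
  refine ⟨-y, ⟨⟨neg_lt_neg hg.2, neg_lt_neg hg.1⟩, ⟨neg_lt_neg hz.2, neg_lt_neg hz.1⟩⟩, ?_⟩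
  simpa only [SegmentFamily.reflect, neg_neg] using hlt

theorem leftOf_reflect : S.reflect.LeftOf g z ↔ S.LeftOf g z := by
  refine ⟨fun h => ?_, LeftOf.reflect S⟩
  simpa only [SegmentFamily.reflect, neg_neg] using LeftOf.reflect S.reflect h

theorem not_leftOf_self (g : ι) : ¬ S.LeftOf g g := fun ⟨_, _, h⟩ => lt_irrefl _ h

theorem LeftOf.overlap {S : SegmentFamily ι} (h : S.LeftOf g z) :
    S.lo g < S.hi z ∧ S.lo z < S.hi g := by
  obtain ⟨y, ⟨hg, hz⟩, -⟩ := h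
  exact ⟨hg.1.trans hz.2, hz.1.trans hg.2⟩

theorem continuous_X (i : ι) : Continuous (S.X i) := by
  have hX : S.X i = fun y => S.X i 0 + S.slope i * y := by
    funext y
    linear_combination S.X_sub i 0 y
  rw [hX]
  fun_prop

/-- Two segments that do not cross do not change sides. -/
theorem X_le_of_X_lt (hgz : g ≠ z) {a b : ℝ} (hag : a ∈ Set.Ioo (S.lo g) (S.hi g))
    (haz : a ∈ Set.Ioo (S.lo z) (S.hi z)) (hbg : b ∈ Set.Icc (S.lo g) (S.hi g))
    (hbz : b ∈ Set.Icc (S.lo z) (S.hi z)) (hlt : S.X g a < S.X z a) : S.X g b ≤ S.X z b := by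
  by_contra! hb
  have hcont : ContinuousOn (fun y => S.X z y - S.X g y) (Set.uIcc a b) :=
    ((S.continuous_X z).sub (S.continuous_X g)).continuousOn
  obtain ⟨c, hc, hXc⟩ := intermediate_value_uIcc hcont
    (Set.mem_uIcc.2 (Or.inr ⟨(sub_neg.2 hb).le, (sub_pos.2 hlt).le⟩))
  have hcb : c ≠ b := by
    rintro rfl
    exact hb.ne' (sub_eq_zero.1 hXc).symm
  have hc_mem : c ∈ Set.Ioo (S.lo g) (S.hi g) ∧ c ∈ Set.Icc (S.lo z) (S.hi z) := by
    rcases Set.mem_uIcc.1 hc with ⟨hac, hcb'⟩ | ⟨hbc, hca⟩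
    · have := lt_of_le_of_ne hcb' hcb
      exact ⟨⟨hag.1.trans_le hac, this.trans_le hbg.2⟩, haz.1.le.trans hac, hcb'.trans hbz.2⟩
    · have := lt_of_le_of_ne hbc hcb.symm
      exact ⟨⟨hbg.1.trans_lt this, hca.trans_lt hag.2⟩, hbz.1.trans hbc, hca.trans haz.2.le⟩
  exact S.X_ne g z c hgz hc_mem.1 hc_mem.2 (sub_eq_zero.1 hXc).symm

theorem leftOf_iff (hgz : g ≠ z) (hyg : y ∈ Set.Icc (S.lo g) (S.hi g))
    (hyz : y ∈ Set.Icc (S.lo z) (S.hi z))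
    (hy : y ∈ Set.Ioo (S.lo g) (S.hi g) ∨ y ∈ Set.Ioo (S.lo z) (S.hi z)) :
    S.LeftOf g z ↔ S.X g y < S.X z y := by
  have hne : S.X g y ≠ S.X z y := by
    rcases hy with hy | hy
    · exact S.X_ne g z y hgz hy hyz
    · exact (S.X_ne z g y hgz.symm hy hyg).symm
  constructor
  · rintro ⟨a, ⟨hag, haz⟩, hlt⟩
    exact lt_of_le_of_ne (S.X_le_of_X_lt hgz hag haz hyg hyz hlt) hne
  · intro hlt
    have hg := S.lo_lt_hi g
    have hz := S.lo_lt_hi z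
    have hoverlap : max (S.lo g) (S.lo z) < min (S.hi g) (S.hi z) := by
      rcases hy with hy | hy
      · exact max_lt (lt_min hg (hy.1.trans_le hyz.2)) (lt_min (hyz.1.trans_lt hy.2) hz)
      · exact max_lt (lt_min hg (hyg.1.trans_lt hy.2)) (lt_min (hy.1.trans_le hyg.2) hz)
    obtain ⟨a, ha, ha'⟩ := exists_between hoverlap
    rw [max_lt_iff] at ha
    rw [lt_min_iff] at ha'
    have hag : a ∈ Set.Ioo (S.lo g) (S.hi g) := ⟨ha.1, ha'.1⟩
    have haz : a ∈ Set.Ioo (S.lo z) (S.hi z) := ⟨ha.2, ha'.2⟩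
    refine ⟨a, ⟨hag, haz⟩, lt_of_not_ge fun hle => ?_⟩
    have hlt' := lt_of_le_of_ne hle (S.X_ne g z a hgz hag ⟨ha.2.le, ha'.2.le⟩).symm
    exact (S.X_le_of_X_lt hgz.symm haz hag hyz hyg hlt').not_gt hlt

theorem slope_ne_and_leftOf_iff_of_lo_eq (hgz : g ≠ z) (h : S.lo g = S.lo z) :
    S.slope g ≠ S.slope z ∧ (S.LeftOf g z ↔ S.slope g < S.slope z) := by
  obtain ⟨y, hy, hy'⟩ := exists_between (lt_min (S.lo_lt_hi g) (h ▸ S.lo_lt_hi z))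
  rw [lt_min_iff] at hy'
  have hyg : y ∈ Set.Ioo (S.lo g) (S.hi g) := ⟨hy, hy'.1⟩
  have hyz : y ∈ Set.Ioo (S.lo z) (S.hi z) := ⟨h ▸ hy, hy'.2⟩
  have hX : S.X z y - S.X g y = (S.slope z - S.slope g) * (y - S.lo g) := by
    have hg := S.X_sub g (S.lo g) y
    have hz := S.X_sub z (S.lo g) y
    have hlo : S.X g (S.lo g) = S.X z (S.lo g) := by rw [S.X_lo, h, S.X_lo]
    linear_combination hz - hg - hlo
  rw [S.leftOf_iff hgz (Set.Ioo_subset_Icc_self hyg) (Set.Ioo_subset_Icc_self hyz) (Or.inl hyg)]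
  refine ⟨fun hslope => S.X_ne g z y hgz hyg (Set.Ioo_subset_Icc_self hyz) ?_, ?_⟩
  · rw [hslope, sub_self, zero_mul] at hX
    exact (sub_eq_zero.1 hX).symm
  · rw [← sub_pos, hX, ← sub_pos (a := S.slope z)]
    exact mul_pos_iff_of_pos_right (sub_pos.2 hy)

theorem slope_ne_and_leftOf_iff_of_hi_eq (hgz : g ≠ z) (h : S.hi g = S.hi z) :
    S.slope g ≠ S.slope z ∧ (S.LeftOf g z ↔ S.slope z < S.slope g) := by
  have := S.reflect.slope_ne_and_leftOf_iff_of_lo_eq hgz (neg_inj.2 h)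
  rw [leftOf_reflect] at this
  simpa only [reflect, ne_eq, neg_inj, neg_lt_neg_iff] using this

theorem iverson_add_iverson_node (g z : ι) :
    iverson (S.lo g ∈ Set.Ioo (S.lo z) (S.hi z) ∧ S.nodeX (S.lo g) < S.X z (S.lo g)) +
      iverson (S.IsNode z (S.lo g) ∧ (S.lo g = S.lo g ↔ S.lo z = S.lo g) ∧ S.LeftOf g z) =
    iverson (S.lo z ≤ S.lo g ∧ S.LeftOf g z) := by
  rcases eq_or_ne g z with rfl | hgz
  · simp [iverson, S.not_leftOf_self]
  have hg := S.lo_lt_hi g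
  rcases lt_trichotomy (S.lo z) (S.lo g) with h | h | h
  · have hleft : S.lo g < S.hi z → (S.LeftOf g z ↔ S.nodeX (S.lo g) < S.X z (S.lo g)) := by
      intro h'
      rw [← S.X_lo, S.leftOf_iff hgz ⟨le_rfl, hg.le⟩ ⟨h.le, h'.le⟩ (Or.inr ⟨h, h'⟩)]
    by_cases h' : S.lo g < S.hi z
    · simp [iverson, h, h', h.le, h.ne, hleft h']
    · have hover : ¬ S.LeftOf g z := fun hl => h' hl.overlap.1
      simp [iverson, h', hover]
  · have hnode : S.IsNode z (S.lo g) := Or.inl h.symm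
    have hlo : ¬ S.lo g ∈ Set.Ioo (S.lo z) (S.hi z) := fun hmem => hmem.1.ne h
    rw [iverson_false fun h' => hlo h'.1, zero_add]
    simp only [hnode, h, le_refl, true_and]
  · simp [iverson, not_le.2 h, not_lt.2 h.le, h.ne']

variable [Fintype ι]

/-- A mod-2 chain of segments without boundary, expressed by duality: every function on nodes
sums to zero over the endpoints of the chain. -/
def IsCycle (Z : ι → ZMod 2) : Prop :=
  ∀ F : ℝ → ZMod 2, ∑ z, Z z * (F (S.lo z) + F (S.hi z)) = 0

/-- The parity of the number of segments of `Z` passing strictly to the right of the node `y`. -/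
noncomputable def nodeParity (Z : ι → ZMod 2) (y : ℝ) : ZMod 2 :=
  ∑ z, Z z * iverson (y ∈ Set.Ioo (S.lo z) (S.hi z) ∧ S.nodeX y < S.X z y)

/-- The parity of the number of segments of `Z` to the right of the points of `g` near its endpoint
`y`. The second sum counts the segments leaving `y` on the same side (upwards or downwards)
as `g`. -/
noncomputable def parityNear (Z : ι → ZMod 2) (g : ι) (y : ℝ) : ZMod 2 :=
  S.nodeParity Z y +
    ∑ z, Z z * iverson (S.IsNode z y ∧ (S.lo g = y ↔ S.lo z = y) ∧ S.LeftOf g z)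

theorem parityNear_lo (Z : ι → ZMod 2) (g : ι) :
    S.parityNear Z g (S.lo g) = ∑ z, Z z * iverson (S.lo z ≤ S.lo g ∧ S.LeftOf g z) := by
  rw [parityNear, nodeParity, ← sum_add_distrib]
  exact sum_congr rfl fun z _ => by rw [← mul_add, iverson_add_iverson_node]

theorem parityNear_reflect (Z : ι → ZMod 2) (hy : S.IsNode g y) :
    S.reflect.parityNear Z g (-y) = S.parityNear Z g y := by
  have hsame : ∀ z, S.IsNode z y →
      ((S.reflect.lo g = -y ↔ S.reflect.lo z = -y) ↔ (S.lo g = y ↔ S.lo z = y)) := by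
    intro z hz
    have := S.lo_lt_hi g
    have := S.lo_lt_hi z
    simp only [reflect, IsNode, neg_inj] at *
    grind
  have hnode : S.reflect.nodeParity Z (-y) = S.nodeParity Z y := by
    simp only [nodeParity, reflect, Set.mem_Ioo, neg_lt_neg_iff, neg_neg, and_comm]
  simp only [parityNear, hnode, isNode_reflect, leftOf_reflect, neg_neg]
  congr! 4 with z _
  exact and_congr_right fun hz => and_congr_left' (hsame z hz)

theorem parityNear_hi (Z : ι → ZMod 2) (g : ι) :
    S.parityNear Z g (S.hi g) = ∑ z, Z z * iverson (S.hi g ≤ S.hi z ∧ S.LeftOf g z) := by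
  rw [← S.parityNear_reflect Z (Or.inr rfl)]
  exact (S.reflect.parityNear_lo Z g).trans (by
    simp only [leftOf_reflect]
    simp only [reflect, neg_le_neg_iff])

/-- The nodes strictly to the right of `g` within its height range, paired with the boundary of
`Z`, account for the difference of the parities at the two ends of `g`. -/
theorem parityNear_lo_eq_parityNear_hi {Z : ι → ZMod 2} (hZ : S.IsCycle Z) (hg : Z g = 0) :
    S.parityNear Z g (S.lo g) = S.parityNear Z g (S.hi g) := by
  rw [← CharTwo.add_eq_zero, parityNear_lo, parityNear_hi, ← sum_add_distrib,
    ← hZ fun y => iverson (y ∈ Set.Ioo (S.lo g) (S.hi g) ∧ S.X g y < S.nodeX y)]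
  refine sum_congr rfl fun z _ => ?_
  rcases eq_or_ne g z with rfl | hgz
  · simp only [hg, zero_mul, add_zero]
  have hz := (S.lo_lt_hi z).le
  have hlo : (S.lo z ∈ Set.Ioo (S.lo g) (S.hi g) ∧ S.X g (S.lo z) < S.nodeX (S.lo z)) ↔
      S.lo z ∈ Set.Ioo (S.lo g) (S.hi g) ∧ S.LeftOf g z := and_congr_right fun h => by
    rw [← S.X_lo, S.leftOf_iff hgz (Set.Ioo_subset_Icc_self h) ⟨le_rfl, hz⟩ (Or.inl h)]
  have hhi : (S.hi z ∈ Set.Ioo (S.lo g) (S.hi g) ∧ S.X g (S.hi z) < S.nodeX (S.hi z)) ↔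
      S.hi z ∈ Set.Ioo (S.lo g) (S.hi g) ∧ S.LeftOf g z := and_congr_right fun h => by
    rw [← S.X_hi, S.leftOf_iff hgz (Set.Ioo_subset_Icc_self h) ⟨hz, le_rfl⟩ (Or.inl h)]
  rw [← mul_add, hlo, hhi]
  congr 1
  by_cases hl : S.LeftOf g z
  · have h1 := hl.overlap.1
    have h2 := hl.overlap.2
    rcases lt_or_ge (S.lo g) (S.lo z) with h | h <;>
      rcases lt_or_ge (S.hi z) (S.hi g) with h' | h' <;>
      simp [iverson, Set.mem_Ioo, hl, h1, h2, h, h', not_le.2, not_lt.2, CharTwo.add_self_eq_zero]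
  · simp only [hl, and_false]

theorem parityNear_eq_nodeParity (Z : ι → ZMod 2) (g : ι) (hZ : ∀ z, S.IsNode z y → Z z = 0) :
    S.parityNear Z g y = S.nodeParity Z y := by
  rw [parityNear, sum_eq_zero, add_zero]
  intro z _
  by_cases h : S.IsNode z y
  · rw [hZ z h, zero_mul]
  · rw [iverson_false fun h' => h h'.1, mul_zero]

theorem parityNear_eq_parityNear {Z : ι → ZMod 2} (hZ : S.IsCycle Z) (hg : Z g = 0) {y y' : ℝ}
    (hy : S.IsNode g y) (hy' : S.IsNode g y') : S.parityNear Z g y = S.parityNear Z g y' := by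
  have := S.parityNear_lo_eq_parityNear_hi hZ hg
  rcases hy with rfl | rfl <;> rcases hy' with rfl | rfl <;> simp only [this]

/-- Nothing lies to the right of the rightmost segment leaving the lowest node. -/
theorem exists_parityNear_lo_eq_zero [Nonempty ι] :
    ∃ g, ∀ Z : ι → ZMod 2, S.parityNear Z g (S.lo g) = 0 := by
  obtain ⟨b, hb⟩ := Finite.exists_min S.lo
  obtain ⟨g, hg, hmax⟩ :=
    Set.exists_max_image {z | S.lo z = S.lo b} S.slope (Set.toFinite _) ⟨b, rfl⟩
  refine ⟨g, fun Z => ?_⟩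
  rw [parityNear_lo]
  refine sum_eq_zero fun z _ => ?_
  rw [iverson_false, mul_zero]
  rintro ⟨hle, hleft⟩
  have hz : S.lo z = S.lo b := le_antisymm (hle.trans_eq hg) (hb z)
  have hgz : g ≠ z := by
    rintro rfl
    exact S.not_leftOf_self g hleft
  exact (((S.slope_ne_and_leftOf_iff_of_lo_eq hgz (hg.trans hz.symm)).2.1 hleft).not_ge
    (hmax z hz))

end SegmentFamily

section GenericHeight

open Set

/-- The height of a point after a shear with factor `θ`. -/
def shearHeight (θ : ℝ) (p : ℝ × ℝ) : ℝ := p.2 + θ * p.1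

theorem exists_injOn_shearHeight {A : Set (ℝ × ℝ)} (hA : A.Finite) :
    ∃ θ : ℝ, InjOn (shearHeight θ) A := by
  -- two points with different abscissas have equal heights for only one `θ`
  have hbad : ((fun q : (ℝ × ℝ) × (ℝ × ℝ) => -(q.1.2 - q.2.2) / (q.1.1 - q.2.1)) ''
      (A ×ˢ A)).Finite := (hA.prod hA).image _
  obtain ⟨θ, hθ⟩ := hbad.exists_notMem
  refine ⟨θ, fun p hp q hq h => ?_⟩
  unfold shearHeight at h
  by_cases hpq : p.1 = q.1
  · rw [hpq] at h
    exact Prod.ext hpq (by linarith)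
  · refine absurd ⟨(p, q), ⟨hp, hq⟩, ?_⟩ hθ
    have := sub_ne_zero.2 hpq
    field_simp
    linarith

end GenericHeight

namespace SegmentFamily

open Set

/-- The abscissa of the point of height `y` on the line through `a` and `b`. -/
noncomputable def lineX (θ : ℝ) (a b : ℝ × ℝ) (y : ℝ) : ℝ :=
  a.1 + (b.1 - a.1) / (shearHeight θ b - shearHeight θ a) * (y - shearHeight θ a)

variable {θ : ℝ} {a b : ℝ × ℝ}

theorem lineX_left : lineX θ a b (shearHeight θ a) = a.1 := by
  rw [lineX, sub_self, mul_zero, add_zero]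

theorem lineX_right (h : shearHeight θ a ≠ shearHeight θ b) :
    lineX θ a b (shearHeight θ b) = b.1 := by
  rw [lineX, div_mul_cancel₀ _ (sub_ne_zero.2 h.symm), add_sub_cancel]

theorem shearHeight_lineX (y : ℝ) :
    shearHeight θ (lineX θ a b y, y - θ * lineX θ a b y) = y := by
  rw [shearHeight, sub_add_cancel]

theorem lineX_mem_segment (h : shearHeight θ a ≠ shearHeight θ b) {y : ℝ}
    (hy : y ∈ uIcc (shearHeight θ a) (shearHeight θ b)) :
    (lineX θ a b y, y - θ * lineX θ a b y) ∈ segment ℝ a b := by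
  rw [← segment_eq_uIcc] at hy
  obtain ⟨r, s, hr, hs, hrs, rfl⟩ := hy
  have hX : lineX θ a b (r * shearHeight θ a + s * shearHeight θ b) = r * a.1 + s * b.1 := by
    have hab := sub_ne_zero.2 h.symm
    obtain rfl : r = 1 - s := by linarith
    simp only [lineX]
    field_simp
    ring
  simp only [smul_eq_mul, hX]
  refine ⟨r, s, hr, hs, hrs, Prod.ext ?_ ?_⟩
  · simp only [Prod.fst_add, Prod.smul_fst, smul_eq_mul]
  · simp only [Prod.snd_add, Prod.smul_snd, smul_eq_mul, shearHeight]
    ring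

variable {ι : Type*} {A B : ι → ℝ × ℝ}

/-- The segments from `A i` to `B i`, meeting only in endpoints, seen through a generic height. -/
noncomputable def ofSegments (hinj : InjOn (shearHeight θ) (range A ∪ range B))
    (hAB : ∀ i, A i ≠ B i)
    (hmeet : ∀ i j p, i ≠ j → p ∈ segment ℝ (A i) (B i) → p ∈ segment ℝ (A j) (B j) →
      p = A i ∨ p = B i) : SegmentFamily ι :=
  have hA i : A i ∈ range A ∪ range B := Or.inl ⟨i, rfl⟩
  have hB i : B i ∈ range A ∪ range B := Or.inr ⟨i, rfl⟩
  have hne i : shearHeight θ (A i) ≠ shearHeight θ (B i) := hinj.ne (hA i) (hB i) (hAB i)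
  have hnode : ∀ p ∈ range A ∪ range B,
      (Function.invFunOn (shearHeight θ) (range A ∪ range B) (shearHeight θ p)).1 = p.1 :=
    fun p hp => congrArg Prod.fst (hinj.leftInvOn_invFunOn hp)
  { lo := fun i => min (shearHeight θ (A i)) (shearHeight θ (B i))
    hi := fun i => max (shearHeight θ (A i)) (shearHeight θ (B i))
    slope := fun i => ((B i).1 - (A i).1) / (shearHeight θ (B i) - shearHeight θ (A i))
    X := fun i => lineX θ (A i) (B i)
    nodeX := fun y => (Function.invFunOn (shearHeight θ) (range A ∪ range B) y).1
    lo_lt_hi := fun i => min_lt_max.2 (hne i)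
    X_sub := fun i y y' => by simp only [lineX]; ring
    X_lo := fun i => by
      rcases min_choice (shearHeight θ (A i)) (shearHeight θ (B i)) with h | h <;> rw [h]
      · rw [lineX_left, hnode _ (hA i)]
      · rw [lineX_right (hne i), hnode _ (hB i)]
    X_hi := fun i => by
      rcases max_choice (shearHeight θ (A i)) (shearHeight θ (B i)) with h | h <;> rw [h]
      · rw [lineX_left, hnode _ (hA i)]
      · rw [lineX_right (hne i), hnode _ (hB i)]
    X_ne := fun i j y hij hi hj hX => by
      have hmem := lineX_mem_segment (hne j) hj
      rw [← hX] at hmem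
      have hy : y = shearHeight θ (A i) ∨ y = shearHeight θ (B i) := by
        rw [← shearHeight_lineX (a := A i) (b := B i) y]
        exact (hmeet i j _ hij (lineX_mem_segment (hne i) (Ioo_subset_Icc_self hi)) hmem).imp
          (congrArg _) (congrArg _)
      rcases hy with rfl | rfl
      · exact left_notMem_uIoo hi
      · exact right_notMem_uIoo hi }

variable {hinj : InjOn (shearHeight θ) (range A ∪ range B)} {hAB : ∀ i, A i ≠ B i}
  {hmeet : ∀ i j p, i ≠ j → p ∈ segment ℝ (A i) (B i) → p ∈ segment ℝ (A j) (B j) →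
    p = A i ∨ p = B i}

theorem isNode_ofSegments {i : ι} {y : ℝ} : (ofSegments hinj hAB hmeet).IsNode i y ↔
    y = shearHeight θ (A i) ∨ y = shearHeight θ (B i) := by
  rcases le_total (shearHeight θ (A i)) (shearHeight θ (B i)) with h | h
  · simp only [IsNode, ofSegments, min_eq_left h, max_eq_right h]
  · simp only [IsNode, ofSegments, min_eq_right h, max_eq_left h, or_comm]

theorem add_ofSegments_ends {i : ι} (F : ℝ → ZMod 2) :
    F ((ofSegments hinj hAB hmeet).lo i) + F ((ofSegments hinj hAB hmeet).hi i) =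
      F (shearHeight θ (A i)) + F (shearHeight θ (B i)) := by
  rcases le_total (shearHeight θ (A i)) (shearHeight θ (B i)) with h | h
  · simp only [ofSegments, min_eq_left h, max_eq_right h]
  · simp only [ofSegments, min_eq_right h, max_eq_left h, add_comm]

end SegmentFamily

namespace Polyline

theorem param_natCast_add (P : Polyline) (i : ℕ) {t : ℝ} (h0 : 0 ≤ t) (h1 : t ≤ 1) :
    P.param (i + t) = P.pt i + t • (P.pt (i + 1) - P.pt i) := by
  rcases h1.lt_or_eq with h1 | rfl
  · have hfloor : ⌊(i : ℝ) + t⌋ = (i : ℤ) := by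
      rw [Int.floor_eq_iff]
      push_cast
      constructor <;> linarith
    simp [param, hfloor]
  · have hfloor : ⌊(i : ℝ) + 1⌋ = ((i + 1 : ℕ) : ℤ) := by
      rw [← Nat.cast_succ, Int.floor_natCast]
    simp [param, hfloor]

theorem param_natCast (P : Polyline) (i : ℕ) : P.param i = P.pt i := by
  simpa using P.param_natCast_add i le_rfl zero_le_one

theorem mem_segment_iff (P : Polyline) (i : ℕ) (p : ℝ × ℝ) :
    p ∈ segment ℝ (P.pt i) (P.pt (i + 1)) ↔ ∃ t ∈ Set.Icc (0 : ℝ) 1, P.param (i + t) = p := by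
  rw [segment_eq_image']
  exact exists_congr fun t => and_congr_right fun ht => by rw [P.param_natCast_add i ht.1 ht.2]

theorem natCast_add_mem_Icc (P : Polyline) {i : ℕ} (hi : i < P.len) {t : ℝ}
    (ht : t ∈ Set.Icc (0 : ℝ) 1) : (i : ℝ) + t ∈ Set.Icc (0 : ℝ) P.len := by
  have : (i : ℝ) + 1 ≤ P.len := mod_cast hi
  exact ⟨add_nonneg i.cast_nonneg ht.1, by linarith [ht.2]⟩

theorem natCast_mem_Icc (P : Polyline) {k : ℕ} (hk : k ≤ P.len) :
    (k : ℝ) ∈ Set.Icc (0 : ℝ) P.len := ⟨k.cast_nonneg, mod_cast hk⟩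

theorem exists_eq_natCast_add (P : Polyline) {s : ℝ} (hs : s ∈ Set.Icc (0 : ℝ) P.len) :
    ∃ i < P.len, ∃ t ∈ Set.Icc (0 : ℝ) 1, s = i + t := by
  have hpos := P.len_pos
  rcases hs.2.lt_or_eq with h | rfl
  · have hfloor := Nat.floor_le hs.1
    have hfloor' := Nat.lt_floor_add_one s
    exact ⟨⌊s⌋₊, (Nat.floor_lt hs.1).2 h, s - ⌊s⌋₊, ⟨by linarith, by linarith⟩, by ring⟩
  · exact ⟨P.len - 1, by omega, 1, ⟨zero_le_one, le_rfl⟩, by rw [Nat.cast_sub hpos]; simp⟩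

theorem mem_image_iff (P : Polyline) (p : ℝ × ℝ) :
    p ∈ P.image ↔ ∃ i < P.len, p ∈ segment ℝ (P.pt i) (P.pt (i + 1)) := by
  simp only [mem_segment_iff]
  constructor
  · rintro ⟨s, hs, rfl⟩
    obtain ⟨i, hi, t, ht, rfl⟩ := P.exists_eq_natCast_add hs
    exact ⟨i, hi, t, ht, rfl⟩
  · rintro ⟨i, hi, t, ht, rfl⟩
    exact ⟨_, P.natCast_add_mem_Icc hi ht, rfl⟩

theorem pt_mem_image (P : Polyline) {k : ℕ} (hk : k ≤ P.len) : P.pt k ∈ P.image :=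
  ⟨k, P.natCast_mem_Icc hk, P.param_natCast k⟩

variable {P : Polyline}

theorem Simple.pt_injOn (hP : P.Simple) : Set.InjOn P.pt (Set.Iic P.len) := by
  intro i hi k hk h
  rw [← param_natCast, ← param_natCast] at h
  exact Nat.cast_injective (hP (P.natCast_mem_Icc hi) (P.natCast_mem_Icc hk) h)

theorem Simple.eq_or_eq_of_pt_mem_segment (hP : P.Simple) {i k : ℕ} (hi : i < P.len)
    (hk : k ≤ P.len) (h : P.pt k ∈ segment ℝ (P.pt i) (P.pt (i + 1))) : k = i ∨ k = i + 1 := by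
  obtain ⟨t, ht, he⟩ := (P.mem_segment_iff i _).1 h
  rw [← param_natCast] at he
  have hkt := hP (P.natCast_add_mem_Icc hi ht) (P.natCast_mem_Icc hk) he
  have hik : (i : ℝ) ≤ k := by linarith [ht.1]
  have hki : (k : ℝ) ≤ (i + 1 : ℕ) := by push_cast; linarith [ht.2]
  have := Nat.cast_le.1 hik
  have := Nat.cast_le.1 hki
  omega

theorem Simple.segments_inter (hP : P.Simple) {i j : ℕ} (hij : i < j) (hj : j < P.len)
    {p : ℝ × ℝ} (hpi : p ∈ segment ℝ (P.pt i) (P.pt (i + 1)))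
    (hpj : p ∈ segment ℝ (P.pt j) (P.pt (j + 1))) : p = P.pt (i + 1) ∧ j = i + 1 := by
  obtain ⟨t, ht, rfl⟩ := (P.mem_segment_iff i _).1 hpi
  obtain ⟨u, hu, hup⟩ := (P.mem_segment_iff j _).1 hpj
  have heq := hP (P.natCast_add_mem_Icc hj hu) (P.natCast_add_mem_Icc (hij.trans hj) ht) hup
  have hij' : (i : ℝ) + 1 ≤ j := mod_cast hij
  obtain rfl : t = 1 := by linarith [ht.2, hu.1]
  have hj' : (j : ℝ) = (i + 1 : ℕ) := by push_cast; linarith [hu.1]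
  exact ⟨by rw [← param_natCast]; push_cast; rfl, Nat.cast_injective hj'⟩

end Polyline

/-! ### Crossing parities in a plane graph -/

section EdgeChains

open Finset

variable {V E : Type*}

/-- The sum of the values of `F` at the two ends of an edge. -/
def edgeSum (F : V → ZMod 2) : Sym2 V → ZMod 2 :=
  Sym2.lift ⟨fun a b => F a + F b, fun _ _ => add_comm _ _⟩

theorem edgeSum_mk (F : V → ZMod 2) (a b : V) : edgeSum F s(a, b) = F a + F b := rfl

/-- The boundary of the mod-2 edge chain `c` of the multigraph with edge set `E` in which `ends e`
are the ends of the edge `e`, evaluated at a function on vertices. -/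
def chainBoundary [Fintype E] (ends : E → Sym2 V) (c : E → ZMod 2) (F : V → ZMod 2) : ZMod 2 :=
  ∑ e, c e * edgeSum F (ends e)

/-- A mod-2 edge chain without boundary. -/
def IsEdgeCycle [Fintype E] (ends : E → Sym2 V) (c : E → ZMod 2) : Prop :=
  ∀ F, chainBoundary ends c F = 0

/-- Local data at the vertices of a plane graph from which crossing parities are computed. The ray
leaving the vertex `v` to the right crosses the edge `e` a number of times congruent to `cross v e`,
while `up v e` and `slope v e` describe the direction in which an edge `e` leaves its end `v`. -/
structure LocalCrossings (V E : Type*) where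
  cross : V → E → ZMod 2
  up : V → E → Prop
  slope : V → E → ℝ

namespace LocalCrossings

variable [Fintype E] (L : LocalCrossings V E) (ends : E → Sym2 V)

/-- The parity of the chain `c` to the right of the edge `e` near its end `v`: crossings with the
ray from `v`, and edges leaving `v` on the same side (upwards or downwards) as `e`, to the right
of `e`. -/
noncomputable def parity (c : E → ZMod 2) (v : V) (e : E) : ZMod 2 :=
  ∑ e', c e' * (L.cross v e' +
    iverson (v ∈ ends e' ∧ (L.up v e ↔ L.up v e') ∧ L.slope v e < L.slope v e'))

/-- What is used of planarity: the parity of a cycle is constant along edges off the cycle, and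
vanishes on the outer edge `e₀`. -/
structure IsPlanar (e₀ : E) : Prop where
  slope_ne : ∀ v e e', e ≠ e' → v ∈ ends e → v ∈ ends e' → (L.up v e ↔ L.up v e') →
    L.slope v e ≠ L.slope v e'
  parity_eq : ∀ c, IsEdgeCycle ends c → ∀ e, c e = 0 → ∀ v ∈ ends e, ∀ w ∈ ends e,
    L.parity ends c v e = L.parity ends c w e
  parity_outer : ∀ c, IsEdgeCycle ends c → c e₀ = 0 → ∀ v ∈ ends e₀, L.parity ends c v e₀ = 0

end LocalCrossings

end EdgeChains

namespace PolyDrawing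

open Finset

section Pieces

variable {V : Type*} {G : SimpleGraph V} (D : PolyDrawing G)

theorem exists_ends (e : G.edgeSet) : ∃ ab : V × V, (e : Sym2 V) = s(ab.1, ab.2) ∧
    (D.poly e).pt 0 = D.pos ab.1 ∧ (D.poly e).pt (D.poly e).len = D.pos ab.2 := by
  obtain ⟨e, he⟩ := e
  induction e using Sym2.ind with
  | _ u v =>
    rcases Set.pair_eq_pair_iff.1 (D.ends u v he) with ⟨hu, hv⟩ | ⟨hv, hu⟩
    · exact ⟨(u, v), rfl, hu, hv⟩
    · exact ⟨(v, u), Sym2.eq_swap, hv, hu⟩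

/-- The end of the edge `e` at which its polyline starts. -/
noncomputable def first (e : G.edgeSet) : V := (D.exists_ends e).choose.1

/-- The end of the edge `e` at which its polyline stops. -/
noncomputable def last (e : G.edgeSet) : V := (D.exists_ends e).choose.2

theorem edge_eq (e : G.edgeSet) : (e : Sym2 V) = s(D.first e, D.last e) :=
  (D.exists_ends e).choose_spec.1

theorem pt_zero (e : G.edgeSet) : (D.poly e).pt 0 = D.pos (D.first e) :=
  (D.exists_ends e).choose_spec.2.1

theorem pt_len (e : G.edgeSet) : (D.poly e).pt (D.poly e).len = D.pos (D.last e) :=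
  (D.exists_ends e).choose_spec.2.2

theorem mem_edge_iff {v : V} {e : G.edgeSet} : v ∈ (e : Sym2 V) ↔ v = D.first e ∨ v = D.last e := by
  rw [D.edge_eq e, Sym2.mem_iff]

theorem adj_first_last (e : G.edgeSet) : G.Adj (D.first e) (D.last e) := by
  rw [← SimpleGraph.mem_edgeSet, ← D.edge_eq]
  exact e.2

/-- The segments of the polylines of all edges. -/
abbrev Piece : Type _ := Σ e : G.edgeSet, Fin (D.poly e).len

/-- The starting point of a segment. -/
def pieceStart (z : D.Piece) : ℝ × ℝ := (D.poly z.1).pt z.2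

/-- The final point of a segment. -/
def pieceEnd (z : D.Piece) : ℝ × ℝ := (D.poly z.1).pt (z.2 + 1)

open Classical in
/-- The segment of the edge `e` at its end `v`. -/
noncomputable def port (v : V) (e : G.edgeSet) : D.Piece :=
  ⟨e, if v = D.first e then ⟨0, (D.poly e).len_pos⟩
    else ⟨(D.poly e).len - 1, Nat.sub_lt (D.poly e).len_pos one_pos⟩⟩

open Classical in
theorem port_snd (v : V) (e : G.edgeSet) :
    ((D.port v e).2 : ℕ) = if v = D.first e then 0 else (D.poly e).len - 1 := by
  by_cases h : v = D.first e <;> simp [port, h]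

variable {D}

theorem pos_eq_port_start_or_end {v : V} {e : G.edgeSet} (h : v ∈ (e : Sym2 V)) :
    D.pos v = D.pieceStart (D.port v e) ∨ D.pos v = D.pieceEnd (D.port v e) := by
  by_cases hv : v = D.first e
  · left
    rw [pieceStart, port_snd, if_pos hv, hv]
    exact (D.pt_zero e).symm
  · right
    have hlast := (D.mem_edge_iff.1 h).resolve_left hv
    rw [pieceEnd, port_snd, if_neg hv, Nat.sub_add_cancel (D.poly e).len_pos, hlast]
    exact (D.pt_len e).symm

theorem mem_image_of_mem_piece {z : D.Piece} {p : ℝ × ℝ}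
    (h : p ∈ segment ℝ (D.pieceStart z) (D.pieceEnd z)) : p ∈ (D.poly z.1).image :=
  (Polyline.mem_image_iff _ _).2 ⟨z.2, z.2.2, h⟩

theorem mem_segment_of_eq_start_or_end {z : D.Piece} {p : ℝ × ℝ}
    (h : p = D.pieceStart z ∨ p = D.pieceEnd z) :
    p ∈ segment ℝ (D.pieceStart z) (D.pieceEnd z) := by
  rcases h with rfl | rfl
  · exact left_mem_segment _ _ _
  · exact right_mem_segment _ _ _

namespace IsPlanar

theorem mem_edge (hD : D.IsPlanar) {e : G.edgeSet} {v : V} (h : D.pos v ∈ (D.poly e).image) :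
    v ∈ (e : Sym2 V) := by
  have hends := hD.2.1 _ _ (D.adj_first_last e)
  rw [← D.edge_eq] at hends
  have hmem : D.pos v ∈ ({D.pos (D.first e), D.pos (D.last e)} : Set (ℝ × ℝ)) :=
    hends ▸ ⟨h, v, rfl⟩
  exact D.mem_edge_iff.2 (hmem.imp (fun h => D.inj h) fun h => D.inj h)

theorem exists_common_end (hD : D.IsPlanar) {e e' : G.edgeSet} (hne : e ≠ e') {p : ℝ × ℝ}
    (hp : p ∈ (D.poly e).image) (hp' : p ∈ (D.poly e').image) :
    ∃ w, D.pos w = p ∧ w ∈ (e : Sym2 V) ∧ w ∈ (e' : Sym2 V) := by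
  obtain ⟨w, hw, rfl⟩ := hD.2.2 e e.2 e' e'.2 (Subtype.coe_ne_coe.2 hne) ⟨hp, hp'⟩
  exact ⟨w, rfl, hw⟩

theorem eq_first_or_last_of_pos_mem (hD : D.IsPlanar) {z : D.Piece} {v : V}
    (h : D.pos v ∈ segment ℝ (D.pieceStart z) (D.pieceEnd z)) :
    v = D.first z.1 ∧ (z.2 : ℕ) = 0 ∨ v = D.last z.1 ∧ (z.2 : ℕ) + 1 = (D.poly z.1).len := by
  have hsimple := hD.1 z.1 z.1.2
  have hlt := z.2.2
  rcases D.mem_edge_iff.1 (hD.mem_edge (mem_image_of_mem_piece h)) with rfl | rfl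
  · rw [← D.pt_zero] at h
    have := hsimple.eq_or_eq_of_pt_mem_segment hlt (Nat.zero_le _) h
    exact Or.inl ⟨rfl, by omega⟩
  · rw [← D.pt_len] at h
    have := hsimple.eq_or_eq_of_pt_mem_segment hlt le_rfl h
    exact Or.inr ⟨rfl, by omega⟩

theorem pieceStart_ne_pieceEnd (hD : D.IsPlanar) (z : D.Piece) :
    D.pieceStart z ≠ D.pieceEnd z := fun h => by
  have := (hD.1 z.1 z.1.2).pt_injOn z.2.2.le (Set.mem_Iic.2 z.2.2) h
  omega

theorem eq_start_or_end_of_mem_pieces (hD : D.IsPlanar) (z z' : D.Piece) (p : ℝ × ℝ) (hne : z ≠ z')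
    (h : p ∈ segment ℝ (D.pieceStart z) (D.pieceEnd z))
    (h' : p ∈ segment ℝ (D.pieceStart z') (D.pieceEnd z')) :
    p = D.pieceStart z ∨ p = D.pieceEnd z := by
  by_cases he : z.1 = z'.1
  · obtain ⟨e, i⟩ := z
    obtain ⟨_, j⟩ := z'
    obtain rfl : e = _ := he
    have hsimple := hD.1 e e.2
    have hij : (i : ℕ) ≠ j := fun hij => hne (by rw [Fin.ext hij])
    rcases lt_or_gt_of_ne hij with hlt | hlt
    · exact Or.inr (hsimple.segments_inter hlt j.2 h h').1
    · obtain ⟨hp, hi⟩ := hsimple.segments_inter hlt i.2 h' h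
      exact Or.inl (by rw [pieceStart, hi, hp])
  · obtain ⟨w, rfl, -⟩ := hD.exists_common_end he (mem_image_of_mem_piece h)
      (mem_image_of_mem_piece h')
    refine (hD.eq_first_or_last_of_pos_mem h).imp ?_ ?_
    · rintro ⟨rfl, hz⟩
      rw [pieceStart, hz, D.pt_zero]
    · rintro ⟨rfl, hz⟩
      rw [pieceEnd, hz, D.pt_len]

theorem eq_port (hD : D.IsPlanar) {z : D.Piece} {v : V}
    (h : D.pos v ∈ segment ℝ (D.pieceStart z) (D.pieceEnd z)) :
    z = D.port v z.1 := by
  have hne := (D.adj_first_last z.1).ne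
  refine Sigma.ext rfl (heq_of_eq (Fin.ext ?_))
  rcases hD.eq_first_or_last_of_pos_mem h with ⟨rfl, hz⟩ | ⟨rfl, hz⟩
  · rw [port_snd, if_pos rfl, hz]
  · rw [port_snd, if_neg hne.symm]
    omega

theorem edge_eq_of_interior_pt (hD : D.IsPlanar) {e : G.edgeSet} {k : ℕ} (hk : 0 < k)
    (hk' : k < (D.poly e).len) {z : D.Piece}
    (h : (D.poly e).pt k ∈ segment ℝ (D.pieceStart z) (D.pieceEnd z)) : z.1 = e := by
  by_contra hne
  have hinj := (hD.1 e e.2).pt_injOn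
  obtain ⟨w, hw, -, hwe⟩ := hD.exists_common_end hne (mem_image_of_mem_piece h)
    (Polyline.pt_mem_image _ hk'.le)
  rcases D.mem_edge_iff.1 hwe with rfl | rfl
  · rw [← D.pt_zero] at hw
    exact hk.ne (hinj (Set.mem_Iic.2 (Nat.zero_le _)) (Set.mem_Iic.2 hk'.le) hw)
  · rw [← D.pt_len] at hw
    exact hk'.ne' (hinj (Set.mem_Iic.2 le_rfl) (Set.mem_Iic.2 hk'.le) hw)

end IsPlanar

end Pieces

section Parities

variable {V : Type*} {G : SimpleGraph V} {D : PolyDrawing G} {θ : ℝ} (hD : D.IsPlanar)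
  (hθ : Set.InjOn (shearHeight θ) (Set.range D.pieceStart ∪ Set.range D.pieceEnd))

namespace IsPlanar

/-- The segments of a planar drawing, seen through a generic height. -/
noncomputable def segmentFamily : SegmentFamily D.Piece :=
  SegmentFamily.ofSegments hθ hD.pieceStart_ne_pieceEnd hD.eq_start_or_end_of_mem_pieces

theorem isNode_shearHeight_iff {z : D.Piece} {p : ℝ × ℝ}
    (hp : p ∈ Set.range D.pieceStart ∪ Set.range D.pieceEnd) :
    (hD.segmentFamily hθ).IsNode z (shearHeight θ p) ↔ p = D.pieceStart z ∨ p = D.pieceEnd z := by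
  rw [segmentFamily, SegmentFamily.isNode_ofSegments, hθ.eq_iff hp (Or.inl ⟨z, rfl⟩),
    hθ.eq_iff hp (Or.inr ⟨z, rfl⟩)]

theorem pos_mem_range {v : V} {e : G.edgeSet} (h : v ∈ (e : Sym2 V)) :
    D.pos v ∈ Set.range D.pieceStart ∪ Set.range D.pieceEnd :=
  (pos_eq_port_start_or_end h).imp (fun h => ⟨_, h.symm⟩) fun h => ⟨_, h.symm⟩

theorem isNode_port {v : V} {e : G.edgeSet} (h : v ∈ (e : Sym2 V)) :
    (hD.segmentFamily hθ).IsNode (D.port v e) (shearHeight θ (D.pos v)) :=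
  (hD.isNode_shearHeight_iff hθ (pos_mem_range h)).2 (pos_eq_port_start_or_end h)

theorem mem_edge_and_eq_port {v : V} {e : G.edgeSet} (h : v ∈ (e : Sym2 V)) {z : D.Piece}
    (hz : (hD.segmentFamily hθ).IsNode z (shearHeight θ (D.pos v))) :
    v ∈ (z.1 : Sym2 V) ∧ z = D.port v z.1 := by
  have hmem := mem_segment_of_eq_start_or_end
    ((hD.isNode_shearHeight_iff hθ (pos_mem_range h)).1 hz)
  exact ⟨hD.mem_edge (mem_image_of_mem_piece hmem), hD.eq_port hmem⟩

open Classical in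
/-- The local crossing data of a planar drawing. -/
noncomputable def localCrossings : LocalCrossings V G.edgeSet where
  cross v e := ∑ i, iverson (shearHeight θ (D.pos v) ∈
      Set.Ioo ((hD.segmentFamily hθ).lo ⟨e, i⟩) ((hD.segmentFamily hθ).hi ⟨e, i⟩) ∧
    (hD.segmentFamily hθ).nodeX (shearHeight θ (D.pos v)) <
      (hD.segmentFamily hθ).X ⟨e, i⟩ (shearHeight θ (D.pos v)))
  up v e := (hD.segmentFamily hθ).lo (D.port v e) = shearHeight θ (D.pos v)
  slope v e := if (hD.segmentFamily hθ).lo (D.port v e) = shearHeight θ (D.pos v)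
    then (hD.segmentFamily hθ).slope (D.port v e) else -(hD.segmentFamily hθ).slope (D.port v e)

theorem slope_ne_and_leftOf_port_iff {v : V} {e e' : G.edgeSet} (hne : e ≠ e')
    (h : v ∈ (e : Sym2 V)) (h' : v ∈ (e' : Sym2 V))
    (hup : (hD.localCrossings hθ).up v e ↔ (hD.localCrossings hθ).up v e') :
    (hD.localCrossings hθ).slope v e ≠ (hD.localCrossings hθ).slope v e' ∧
      ((hD.segmentFamily hθ).LeftOf (D.port v e) (D.port v e') ↔
        (hD.localCrossings hθ).slope v e < (hD.localCrossings hθ).slope v e') := by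
  have hport : D.port v e ≠ D.port v e' := fun h => hne (congrArg Sigma.fst h)
  simp only [localCrossings] at hup ⊢
  by_cases hu : (hD.segmentFamily hθ).lo (D.port v e) = shearHeight θ (D.pos v)
  · have hu' := hup.1 hu
    rw [if_pos hu, if_pos hu']
    exact (hD.segmentFamily hθ).slope_ne_and_leftOf_iff_of_lo_eq hport (hu.trans hu'.symm)
  · have hu' := fun h => hu (hup.2 h)
    have hhi := (hD.isNode_port hθ h).resolve_left (Ne.symm hu)
    have hhi' := (hD.isNode_port hθ h').resolve_left (Ne.symm hu')
    rw [if_neg hu, if_neg hu', ne_eq, neg_inj, neg_lt_neg_iff]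
    exact (hD.segmentFamily hθ).slope_ne_and_leftOf_iff_of_hi_eq hport (hhi.symm.trans hhi')

theorem sum_iverson_isNode {v : V} {e : G.edgeSet} (h : v ∈ (e : Sym2 V)) (e' : G.edgeSet) :
    ∑ i, iverson ((hD.segmentFamily hθ).IsNode ⟨e', i⟩ (shearHeight θ (D.pos v)) ∧
      ((hD.segmentFamily hθ).lo (D.port v e) = shearHeight θ (D.pos v) ↔
        (hD.segmentFamily hθ).lo ⟨e', i⟩ = shearHeight θ (D.pos v)) ∧
      (hD.segmentFamily hθ).LeftOf (D.port v e) ⟨e', i⟩) =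
    iverson (v ∈ (e' : Sym2 V) ∧
      ((hD.localCrossings hθ).up v e ↔ (hD.localCrossings hθ).up v e') ∧
      (hD.localCrossings hθ).slope v e < (hD.localCrossings hθ).slope v e') := by
  by_cases h' : v ∈ (e' : Sym2 V)
  · refine (sum_eq_single (D.port v e').2 ?_ ?_).trans ?_
    · refine fun i _ hi => iverson_false fun hnode => hi ?_
      exact eq_of_heq (Sigma.ext_iff.1 (hD.mem_edge_and_eq_port hθ h hnode.1).2).2
    · exact fun hmem => absurd (mem_univ _) hmem
    · congr 1
      rw [eq_iff_iff]
      refine and_congr (iff_of_true (hD.isNode_port hθ h') h') (and_congr_right fun hup => ?_)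
      rcases eq_or_ne e e' with rfl | hne
      · exact iff_of_false (SegmentFamily.not_leftOf_self _ _) (lt_irrefl _)
      · exact (hD.slope_ne_and_leftOf_port_iff hθ hne h h' hup).2
  · rw [iverson_false fun hmem => h' hmem.1]
    exact sum_eq_zero fun i _ =>
      iverson_false fun hnode => h' (hD.mem_edge_and_eq_port hθ h hnode.1).1

variable [Fintype G.edgeSet]

theorem parity_eq_parityNear_port (c : G.edgeSet → ZMod 2) {v : V} {e : G.edgeSet}
    (h : v ∈ (e : Sym2 V)) : (hD.localCrossings hθ).parity Subtype.val c v e =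
      (hD.segmentFamily hθ).parityNear (fun z => c z.1) (D.port v e)
        (shearHeight θ (D.pos v)) := by
  rw [SegmentFamily.parityNear, SegmentFamily.nodeParity, Fintype.sum_sigma, Fintype.sum_sigma,
    ← sum_add_distrib, LocalCrossings.parity]
  refine sum_congr rfl fun e' _ => ?_
  rw [mul_add, ← hD.sum_iverson_isNode hθ h e']
  simp only [localCrossings, mul_sum]

theorem isCycle_pieces {c : G.edgeSet → ZMod 2} (hc : IsEdgeCycle Subtype.val c) :
    (hD.segmentFamily hθ).IsCycle fun z => c z.1 := by
  intro F
  rw [Fintype.sum_sigma, ← hc fun v => F (shearHeight θ (D.pos v)), chainBoundary]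
  refine sum_congr rfl fun e _ => ?_
  have hends : edgeSum (fun v => F (shearHeight θ (D.pos v))) e =
      F (shearHeight θ ((D.poly e).pt 0)) + F (shearHeight θ ((D.poly e).pt (D.poly e).len)) := by
    rw [D.pt_zero, D.pt_len, D.edge_eq, edgeSum_mk]
  rw [hends]
  refine (mul_sum _ _ _).symm.trans (congrArg (c e * ·) ?_)
  calc ∑ i : Fin (D.poly e).len, (F ((hD.segmentFamily hθ).lo ⟨e, i⟩) +
        F ((hD.segmentFamily hθ).hi ⟨e, i⟩))
    _ = ∑ i : Fin (D.poly e).len, (F (shearHeight θ ((D.poly e).pt (i + 1))) -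
          F (shearHeight θ ((D.poly e).pt i))) := sum_congr rfl fun i _ => by
        rw [segmentFamily, SegmentFamily.add_ofSegments_ends, CharTwo.sub_eq_add, add_comm]
        rfl
    _ = F (shearHeight θ ((D.poly e).pt (D.poly e).len)) -
          F (shearHeight θ ((D.poly e).pt 0)) := by
        rw [Fin.sum_univ_eq_sum_range fun i => F (shearHeight θ ((D.poly e).pt (i + 1))) -
          F (shearHeight θ ((D.poly e).pt i)), sum_range_sub fun i =>
          F (shearHeight θ ((D.poly e).pt i))]
    _ = _ := by rw [CharTwo.sub_eq_add, add_comm]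

theorem parityNear_piece_eq_parityNear_first {c : G.edgeSet → ZMod 2}
    (hc : IsEdgeCycle Subtype.val c) {e : G.edgeSet} (he : c e = 0) (i : ℕ)
    (hi : i < (D.poly e).len) {y : ℝ} (hy : (hD.segmentFamily hθ).IsNode ⟨e, i, hi⟩ y) :
    (hD.segmentFamily hθ).parityNear (fun z => c z.1) ⟨e, i, hi⟩ y =
      (hD.segmentFamily hθ).parityNear (fun z => c z.1) ⟨e, 0, (D.poly e).len_pos⟩
        (shearHeight θ (D.pos (D.first e))) := by
  have hZ := hD.isCycle_pieces hθ hc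
  have hstart : ∀ z : D.Piece, (hD.segmentFamily hθ).IsNode z (shearHeight θ (D.pieceStart z)) :=
    fun z => (hD.isNode_shearHeight_iff hθ (Or.inl ⟨z, rfl⟩)).2 (Or.inl rfl)
  induction i generalizing y with
  | zero =>
    refine SegmentFamily.parityNear_eq_parityNear _ hZ he hy ?_
    rw [← D.pt_zero]
    exact hstart ⟨e, 0, hi⟩
  | succ i ih =>
    have hi' : i < (D.poly e).len := i.lt_succ_self.trans hi
    have hend : (hD.segmentFamily hθ).IsNode ⟨e, i, hi'⟩
        (shearHeight θ ((D.poly e).pt (i + 1))) :=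
      (hD.isNode_shearHeight_iff hθ (Or.inr ⟨⟨e, i, hi'⟩, rfl⟩)).2 (Or.inr rfl)
    have hoff : ∀ z : D.Piece, (hD.segmentFamily hθ).IsNode z
        (shearHeight θ ((D.poly e).pt (i + 1))) → c z.1 = 0 := by
      intro z hz
      have hz' := (hD.isNode_shearHeight_iff hθ (Or.inr ⟨⟨e, i, hi'⟩, rfl⟩)).1 hz
      rw [hD.edge_eq_of_interior_pt i.succ_pos hi (mem_segment_of_eq_start_or_end hz'), he]
    rw [← ih hi' hend, SegmentFamily.parityNear_eq_parityNear _ hZ he hy (hstart ⟨e, i + 1, hi⟩),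
      SegmentFamily.parityNear_eq_nodeParity _ _ _ hoff]
    exact SegmentFamily.parityNear_eq_nodeParity _ _ _ hoff

theorem parityNear_eq_of_edge_eq {c : G.edgeSet → ZMod 2} (hc : IsEdgeCycle Subtype.val c)
    {z z' : D.Piece} (hzz' : z.1 = z'.1) (hz : c z.1 = 0) {y y' : ℝ}
    (hy : (hD.segmentFamily hθ).IsNode z y) (hy' : (hD.segmentFamily hθ).IsNode z' y') :
    (hD.segmentFamily hθ).parityNear (fun z => c z.1) z y =
      (hD.segmentFamily hθ).parityNear (fun z => c z.1) z' y' := by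
  obtain ⟨e, i⟩ := z
  obtain ⟨_, j⟩ := z'
  obtain rfl : e = _ := hzz'
  rw [hD.parityNear_piece_eq_parityNear_first hθ hc hz i i.2 hy,
    hD.parityNear_piece_eq_parityNear_first hθ hc hz j j.2 hy']

end IsPlanar

end Parities

end PolyDrawing

theorem GraphPlanar.exists_localCrossings {V : Type*} {G : SimpleGraph V} [Fintype G.edgeSet]
    [Nonempty G.edgeSet] (hG : GraphPlanar G) :
    ∃ (e₀ : G.edgeSet) (L : LocalCrossings V G.edgeSet), L.IsPlanar Subtype.val e₀ := by
  obtain ⟨D, hD⟩ := hG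
  have : Nonempty D.Piece := ‹Nonempty G.edgeSet›.map fun e => ⟨e, 0, (D.poly e).len_pos⟩
  obtain ⟨θ, hθ⟩ := exists_injOn_shearHeight
    ((Set.finite_range D.pieceStart).union (Set.finite_range D.pieceEnd))
  obtain ⟨g, hg⟩ := (hD.segmentFamily hθ).exists_parityNear_lo_eq_zero
  refine ⟨g.1, hD.localCrossings hθ, ?_, ?_, ?_⟩
  · intro v e e' hne h h' hup
    exact (hD.slope_ne_and_leftOf_port_iff hθ hne h h' hup).1
  · intro c hc e he v hv w hw
    rw [hD.parity_eq_parityNear_port hθ c hv, hD.parity_eq_parityNear_port hθ c hw]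
    exact hD.parityNear_eq_of_edge_eq (z := D.port v e) (z' := D.port w e) hθ hc rfl he
      (hD.isNode_port hθ hv) (hD.isNode_port hθ hw)
  · intro c hc he v hv
    rw [hD.parity_eq_parityNear_port hθ c hv, ← hg fun z => c z.1]
    exact hD.parityNear_eq_of_edge_eq (z := D.port v g.1) (z' := g) hθ hc rfl he
      (hD.isNode_port hθ hv) (Or.inl rfl)

/-! ### st-numberings -/

section STNumbering

variable {V : Type*} {G : SimpleGraph V} {s t : V} {S : Set V} {g : V → ℤ}

/-- `g` is, up to its range of values, an st-numbering of the subgraph of `G` induced on `S`: its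
values are distinct, every vertex other than `s` has a smaller neighbour and every vertex other
than `t` a larger one. -/
structure IsSTNumberingOn (G : SimpleGraph V) (s t : V) (S : Set V) (g : V → ℤ) : Prop where
  injOn : Set.InjOn g S
  le : ∀ v ∈ S, g s ≤ g v ∧ g v ≤ g t
  exists_lt : ∀ v ∈ S, v ≠ s → ∃ w ∈ S, G.Adj v w ∧ g w < g v
  exists_gt : ∀ v ∈ S, v ≠ t → ∃ w ∈ S, G.Adj v w ∧ g v < g w

/-- `p 0, …, p (k + 1)` is an ear of `S`: a path of `G` whose ends are in `S`, whereas
`p 1, …, p k` are distinct vertices outside `S`. -/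
structure IsEar (G : SimpleGraph V) (S : Set V) (p : ℕ → V) (k : ℕ) : Prop where
  first_mem : p 0 ∈ S
  last_mem : p (k + 1) ∈ S
  notMem : ∀ i ∈ Set.Icc 1 k, p i ∉ S
  injOn : Set.InjOn p (Set.Icc 1 k)
  adj : ∀ i ≤ k, G.Adj (p i) (p (i + 1))

open Classical in
/-- The numbering of an ear together with `S`: after the values on `S` are spread out by the factor
`k + 1`, the inner vertices of the ear are numbered consecutively just above `p 0`. -/
noncomputable def earLabel (g : V → ℤ) (S : Set V) (p : ℕ → V) (k : ℕ) (v : V) : ℤ :=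
  if v ∈ S then (k + 1) * g v
  else (k + 1) * g (p 0) + (Function.invFunOn p (Set.Icc 1 k) v : ℕ)

theorem IsSTNumberingOn.neg (h : IsSTNumberingOn G s t S g) :
    IsSTNumberingOn G t s S fun v => -g v where
  injOn v hv w hw hvw := h.injOn hv hw (neg_injective hvw)
  le v hv := ⟨neg_le_neg (h.le v hv).2, neg_le_neg (h.le v hv).1⟩
  exists_lt v hv hvt := by simpa only [neg_lt_neg_iff] using h.exists_gt v hv hvt
  exists_gt v hv hvs := by simpa only [neg_lt_neg_iff] using h.exists_lt v hv hvs

open Classical in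
theorem isSTNumberingOn_pair (hst : G.Adj s t) :
    IsSTNumberingOn G s t {s, t} fun v => if v = s then 0 else 1 where
  injOn := by
    rintro v (rfl | rfl) w (rfl | rfl) <;> simp [hst.ne.symm]
  le := by
    rintro v (rfl | rfl) <;> simp [hst.ne.symm]
  exists_lt := by
    rintro v (rfl | rfl) hv
    · exact absurd rfl hv
    · exact ⟨s, by simp, hst.symm, by simp [hv]⟩
  exists_gt := by
    rintro v (rfl | rfl) hv
    · exact ⟨t, by simp, hst, by simp [hv.symm]⟩
    · exact absurd rfl hv

section Ear

variable {p : ℕ → V} {k : ℕ}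

theorem earLabel_of_mem {v : V} (hv : v ∈ S) : earLabel g S p k v = (k + 1) * g v := if_pos hv

theorem earLabel_lt_of_lt {v w : V} (hv : v ∈ S) (hw : w ∈ S) (h : g v < g w) :
    earLabel g S p k v < earLabel g S p k w := by
  rw [earLabel_of_mem hv, earLabel_of_mem hw]
  exact mul_lt_mul_of_pos_left h (by positivity)

theorem earLabel_le_of_le {v w : V} (hv : v ∈ S) (hw : w ∈ S) (h : g v ≤ g w) :
    earLabel g S p k v ≤ earLabel g S p k w := by
  rw [earLabel_of_mem hv, earLabel_of_mem hw]
  exact mul_le_mul_of_nonneg_left h (by positivity)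

namespace IsEar

theorem earLabel_apply (h : IsEar G S p k) {i : ℕ} (hi : i ≤ k) :
    earLabel g S p k (p i) = (k + 1) * g (p 0) + i := by
  rcases i.eq_zero_or_pos with rfl | h0
  · rw [earLabel_of_mem h.first_mem, Nat.cast_zero, add_zero]
  · rw [earLabel, if_neg (h.notMem i ⟨h0, hi⟩), h.injOn.leftInvOn_invFunOn ⟨h0, hi⟩]

theorem earLabel_lt_succ (h : IsEar G S p k) (hp : g (p 0) < g (p (k + 1))) {i : ℕ} (hi : i ≤ k) :
    earLabel g S p k (p i) < earLabel g S p k (p (i + 1)) := by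
  rw [h.earLabel_apply hi]
  rcases hi.lt_or_eq with hik | rfl
  · rw [h.earLabel_apply hik]
    push_cast
    linarith
  · rw [earLabel_of_mem h.last_mem]
    nlinarith

theorem earLabel_ne (h : IsEar G S p k) {v : V} (hv : v ∈ S) {i : ℕ} (hi : i ∈ Set.Icc 1 k) :
    earLabel g S p k v ≠ earLabel g S p k (p i) := by
  obtain ⟨h1, hik⟩ := hi
  rw [earLabel_of_mem hv, h.earLabel_apply hik]
  intro heq
  have hgt : g (p 0) < g v := by nlinarith
  nlinarith

theorem injOn_earLabel (h : IsEar G S p k) (hg : Set.InjOn g S) :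
    Set.InjOn (earLabel g S p k) (S ∪ p '' Set.Icc 1 k) := by
  rintro v (hv | ⟨i, hi, rfl⟩) w (hw | ⟨j, hj, rfl⟩) hvw
  · rw [earLabel_of_mem hv, earLabel_of_mem hw] at hvw
    exact hg hv hw (mul_left_cancel₀ (by positivity) hvw)
  · exact absurd hvw (h.earLabel_ne hv hj)
  · exact absurd hvw.symm (h.earLabel_ne hw hi)
  · rw [h.earLabel_apply hi.2, h.earLabel_apply hj.2, add_right_inj, Nat.cast_inj] at hvw
    rw [hvw]

theorem apply_mem (h : IsEar G S p k) {i : ℕ} (hi : i ≤ k + 1) : p i ∈ S ∪ p '' Set.Icc 1 k := by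
  rcases i.eq_zero_or_pos with rfl | h0
  · exact Or.inl h.first_mem
  · rcases hi.lt_or_eq with hik | rfl
    · exact Or.inr ⟨i, ⟨h0, Nat.lt_succ_iff.1 hik⟩, rfl⟩
    · exact Or.inl h.last_mem

end IsEar

theorem IsSTNumberingOn.union_ear (hg : IsSTNumberingOn G s t S g) (hs : s ∈ S) (ht : t ∈ S)
    (h : IsEar G S p k) (hp : g (p 0) < g (p (k + 1))) :
    IsSTNumberingOn G s t (S ∪ p '' Set.Icc 1 k) (earLabel g S p k) where
  injOn := h.injOn_earLabel hg.injOn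
  le := by
    rintro v (hv | ⟨i, ⟨_, hik⟩, rfl⟩)
    · exact ⟨earLabel_le_of_le hs hv (hg.le v hv).1, earLabel_le_of_le hv ht (hg.le v hv).2⟩
    · have hlo := (hg.le _ h.first_mem).1
      have hhi := (hg.le _ h.last_mem).2
      rw [h.earLabel_apply hik, earLabel_of_mem hs, earLabel_of_mem ht]
      constructor <;> nlinarith
  exists_lt := by
    rintro v (hv | ⟨i, ⟨h1, hik⟩, rfl⟩) hvs
    · obtain ⟨w, hw, hadj, hlt⟩ := hg.exists_lt v hv hvs
      exact ⟨w, Or.inl hw, hadj, earLabel_lt_of_lt hw hv hlt⟩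
    · obtain ⟨i, rfl⟩ := Nat.exists_eq_succ_of_ne_zero (Nat.one_le_iff_ne_zero.1 h1)
      have hi : i ≤ k := (Nat.le_succ i).trans hik
      exact ⟨p i, h.apply_mem (hi.trans (Nat.le_succ k)), (h.adj i hi).symm,
        h.earLabel_lt_succ hp hi⟩
  exists_gt := by
    rintro v (hv | ⟨i, ⟨_, hik⟩, rfl⟩) hvt
    · obtain ⟨w, hw, hadj, hlt⟩ := hg.exists_gt v hv hvt
      exact ⟨w, Or.inl hw, hadj, earLabel_lt_of_lt hv hw hlt⟩
    · exact ⟨p (i + 1), h.apply_mem (Nat.succ_le_succ hik), h.adj i hik,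
        h.earLabel_lt_succ hp hik⟩

end Ear

theorem exists_isEar_getVert {a x : V} {W : G.Walk a x} (hW : W.IsPath) (ha : a ∈ S) (hx : x ∈ S)
    (hax : a ≠ x) (h1 : W.getVert 1 ∉ S) :
    ∃ k ≥ 1, IsEar G S W.getVert k ∧ W.getVert (k + 1) ≠ W.getVert 0 := by
  have hex : ∃ n, n + 1 ≤ W.length ∧ W.getVert (n + 1) ∈ S := by
    have hpos : W.length ≠ 0 := fun h => hax (SimpleGraph.Walk.eq_of_length_eq_zero h)
    refine ⟨W.length - 1, ?_, ?_⟩ <;> rw [Nat.sub_add_cancel (Nat.pos_of_ne_zero hpos)]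
    rwa [W.getVert_length]
  classical
  obtain ⟨hle, hmem⟩ := Nat.find_spec hex
  have hmin : ∀ i ∈ Set.Icc 1 (Nat.find hex), W.getVert i ∉ S := by
    rintro i ⟨hi, hik⟩ h
    obtain ⟨i, rfl⟩ := Nat.exists_eq_succ_of_ne_zero (Nat.one_le_iff_ne_zero.1 hi)
    exact Nat.find_min hex hik ⟨by omega, h⟩
  refine ⟨Nat.find hex, Nat.one_le_iff_ne_zero.2 fun h => h1 ?_, ⟨?_, hmem, hmin, ?_, ?_⟩, ?_⟩
  · rwa [h] at hmem
  · rwa [W.getVert_zero]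
  · exact hW.getVert_injOn.mono fun i hi => (hi.2.trans (Nat.le_succ _)).trans hle
  · exact fun i hi => W.adj_getVert_succ ((Nat.lt_succ_of_le hi).trans_le hle)
  · exact fun h => Nat.succ_ne_zero _ (hW.getVert_injOn hle (Nat.zero_le _) h)

theorem exists_isEar (hG : G.Preconnected) (hcut : ∀ v, (G.induce {v}ᶜ).Preconnected)
    (hS : S.Nontrivial) {v : V} (hv : v ∉ S) :
    ∃ p k, 1 ≤ k ∧ IsEar G S p k ∧ p (k + 1) ≠ p 0 := by
  obtain ⟨u, hu⟩ := hS.nonempty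
  obtain ⟨⟨⟨a, b⟩, hab⟩, -, ha, hb⟩ := (hG u v).some.exists_boundary_dart S hu hv
  obtain ⟨x, hx, hxa⟩ := hS.exists_ne a
  have hb' : b ∈ ({a}ᶜ : Set V) := hab.ne.symm
  have hx' : x ∈ ({a}ᶜ : Set V) := hxa
  obtain ⟨P⟩ := hcut a ⟨b, hb'⟩ ⟨x, hx'⟩
  classical
  obtain ⟨W, hW, haW⟩ : ∃ W : G.Walk b x, W.IsPath ∧ a ∉ W.support := by
    refine ⟨P.toPath.1.map (SimpleGraph.Embedding.induce _).toHom,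
      P.toPath.2.map Subtype.val_injective, fun h => ?_⟩
    obtain ⟨y, -, hy⟩ :=
      List.mem_map.1 ((congrArg (a ∈ ·) (SimpleGraph.Walk.support_map _ P.toPath.1)).mp h)
    exact y.2 hy
  have hadj : G.Adj a b := hab
  obtain ⟨k, hk, hear, hne⟩ := exists_isEar_getVert (hW.cons haW (h := hadj)) ha hx hxa.symm
    (by rwa [SimpleGraph.Walk.getVert_cons_succ, SimpleGraph.Walk.getVert_zero])
  exact ⟨_, k, hk, hear, hne⟩

theorem IsSTNumberingOn.exists_union_ear (hg : IsSTNumberingOn G s t S g) (hs : s ∈ S)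
    (ht : t ∈ S) {p : ℕ → V} {k : ℕ} (h : IsEar G S p k) (hp : p (k + 1) ≠ p 0) :
    ∃ g', IsSTNumberingOn G s t (S ∪ p '' Set.Icc 1 k) g' := by
  rcases lt_or_gt_of_ne fun heq => hp (hg.injOn h.last_mem h.first_mem heq) with hlt | hlt
  · exact ⟨_, (hg.neg.union_ear ht hs h (neg_lt_neg hlt)).neg⟩
  · exact ⟨_, hg.union_ear hs ht h hlt⟩

/- A maximal vertex set carrying a partial st-numbering contains every vertex, as otherwise an ear
could be added to it. -/
theorem exists_isSTNumberingOn_univ [Finite V] (hG : G.Preconnected)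
    (hcut : ∀ v, (G.induce {v}ᶜ).Preconnected) (hst : G.Adj s t) :
    ∃ g, IsSTNumberingOn G s t Set.univ g := by
  obtain ⟨S, -, hmax⟩ := (Set.toFinite {S : Set V | s ∈ S ∧ t ∈ S ∧
    ∃ g, IsSTNumberingOn G s t S g}).exists_le_maximal
      ⟨Set.mem_insert s {t}, Set.mem_insert_of_mem s rfl, _, isSTNumberingOn_pair hst⟩
  obtain ⟨hs, ht, g, hg⟩ := hmax.prop
  suffices hS : S = Set.univ from ⟨g, hS ▸ hg⟩
  by_contra hS
  obtain ⟨v, hv⟩ := (Set.ne_univ_iff_exists_notMem S).1 hS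
  obtain ⟨p, k, hk, hear, hp⟩ := exists_isEar hG hcut ⟨s, hs, t, ht, hst.ne⟩ hv
  have hsub : S ∪ p '' Set.Icc 1 k ⊆ S := hmax.le_of_ge
    ⟨Or.inl hs, Or.inl ht, hg.exists_union_ear hs ht hear hp⟩ Set.subset_union_left
  exact hear.notMem 1 ⟨le_rfl, hk⟩ (hsub (Or.inr ⟨1, ⟨le_rfl, hk⟩, rfl⟩))

end STNumbering

/-! ### Edge cycles and rotations at a vertex -/

section EdgeChains

variable {V E : Type*} [Fintype E] {ends : E → Sym2 V}

theorem chainBoundary_zero (F : V → ZMod 2) : chainBoundary ends 0 F = 0 := by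
  simp [chainBoundary]

theorem chainBoundary_add (c c' : E → ZMod 2) (F : V → ZMod 2) :
    chainBoundary ends (c + c') F = chainBoundary ends c F + chainBoundary ends c' F := by
  simp only [chainBoundary, Pi.add_apply, add_mul, Finset.sum_add_distrib]

theorem sum_single_one_mul [DecidableEq E] (e : E) (g : E → ZMod 2) :
    ∑ x, (Pi.single e 1 : E → ZMod 2) x * g x = g e := by
  simp [Pi.single_apply]

theorem chainBoundary_single [DecidableEq E] (e : E) (F : V → ZMod 2) :
    chainBoundary ends (Pi.single e 1) F = edgeSum F (ends e) :=
  sum_single_one_mul e _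

theorem IsEdgeCycle.add {c c' : E → ZMod 2} (hc : IsEdgeCycle ends c) (hc' : IsEdgeCycle ends c') :
    IsEdgeCycle ends (c + c') := fun F => by
  rw [chainBoundary_add, hc F, hc' F, add_zero]

end EdgeChains

namespace LocalCrossings

variable {V E : Type*} (L : LocalCrossings V E)

/-- The indicator of `y` leaving the vertex `v` on the same side (upwards or downwards) as `x` and
to the right of `x`. -/
noncomputable def turn (v : V) (x y : E) : ZMod 2 :=
  iverson ((L.up v x ↔ L.up v y) ∧ L.slope v x < L.slope v y)

open Classical in
/-- The position of the edge `x` in the rotation at the vertex `v` starting from the edge `a`: the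
edges to the right of `a` on the side of `a` come first, then those on the other side from right to
left, and then those to the left of `a`. -/
noncomputable def rotationKey (v : V) (a x : E) : ℤ ×ₗ ℝ :=
  toLex (if L.up v a ↔ L.up v x then (if L.slope v a < L.slope v x then 0 else 2) else 1,
    if L.up v a ↔ L.up v x then L.slope v x else -L.slope v x)

variable {L} [Fintype E] {ends : E → Sym2 V}

theorem parity_add (c c' : E → ZMod 2) (v : V) (e : E) :
    L.parity ends (c + c') v e = L.parity ends c v e + L.parity ends c' v e := by
  simp only [parity, Pi.add_apply, add_mul, Finset.sum_add_distrib]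

theorem parity_congr_of_notMem {c : E → ZMod 2} {v : V} (h : ∀ z, c z ≠ 0 → v ∉ ends z) (e e' : E) :
    L.parity ends c v e = L.parity ends c v e' := by
  refine Finset.sum_congr rfl fun z _ => ?_
  by_cases hz : c z = 0
  · rw [hz, zero_mul, zero_mul]
  · rw [iverson_false fun h' => h z hz h'.1, iverson_false fun h' => h z hz h'.1]

theorem parity_eq_sum_cross_add_sum_turn (c : E → ZMod 2) (v : V) (e : E) :
    L.parity ends c v e =
      ∑ z, c z * L.cross v z + ∑ z, c z * (iverson (v ∈ ends z) * L.turn v e z) := by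
  have hturn : ∀ z, iverson (v ∈ ends z ∧ (L.up v e ↔ L.up v z) ∧ L.slope v e < L.slope v z) =
      iverson (v ∈ ends z) * L.turn v e z := fun z => by
    by_cases hz : v ∈ ends z
    · rw [iverson_true hz, one_mul]
      exact congrArg iverson (by simp only [hz, true_and])
    · rw [iverson_false hz, iverson_false fun h => hz h.1, zero_mul]
  simp only [parity, hturn, mul_add, Finset.sum_add_distrib]

namespace IsPlanar

variable {e₀ : E} {v : V} {a x y : E}

/- Comparing two edges with each other and with a third one, on one side of `v` each, amounts to
comparing their positions in the rotation. -/
theorem turn_add_turn_add_turn (hL : L.IsPlanar ends e₀) (ha : v ∈ ends a) (hx : v ∈ ends x)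
    (hy : v ∈ ends y) (hya : y ≠ a) (hxy : x ≠ y) :
    L.turn v a x + L.turn v y a + L.turn v y x =
      iverson (L.rotationKey v a x < L.rotationKey v a y) := by
  have nyx := hL.slope_ne v x y hxy hx hy
  have nay := hL.slope_ne v a y hya.symm ha hy
  simp only [turn, iverson, rotationKey, Prod.Lex.toLex_lt_toLex]
  grind

theorem injOn_rotationKey (hL : L.IsPlanar ends e₀) {s : Set E} (hs : ∀ x ∈ s, v ∈ ends x) :
    Set.InjOn (L.rotationKey v a) s := by
  intro x hx y hy hxy
  by_contra hne
  have nxy := hL.slope_ne v x y hne (hs x hx) (hs y hy)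
  simp only [rotationKey, EmbeddingLike.apply_eq_iff_eq, Prod.mk.injEq] at hxy
  grind

end IsPlanar

end LocalCrossings

/-! ### st-oriented graphs -/

/-- An st-oriented multigraph: the vertices have distinct levels, edges go up, the edge `outer`
joins the lowest vertex `bot` to the highest vertex `top`, and every other vertex has edges on both
sides. -/
structure STGraph (V E : Type*) where
  src : E → V
  tgt : E → V
  level : V → ℕ
  bot : V
  top : V
  outer : E
  level_injective : Function.Injective level
  level_lt : ∀ e, level (src e) < level (tgt e)
  bot_le : ∀ v, level bot ≤ level v
  le_top : ∀ v, level v ≤ level top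
  src_outer : src outer = bot
  tgt_outer : tgt outer = top
  exists_tgt_eq : ∀ v, v ≠ bot → ∃ e, tgt e = v
  exists_src_eq : ∀ v, v ≠ top → ∃ e, src e = v

namespace STGraph

variable {V E : Type*} (S : STGraph V E)

/-- The unordered pair of the endvertices of an edge. -/
def ends (e : E) : Sym2 V := s(S.src e, S.tgt e)

/-- The graph turned upside down. -/
def reverse : STGraph V E where
  src := S.tgt
  tgt := S.src
  level v := S.level S.top - S.level v
  bot := S.top
  top := S.bot
  outer := S.outer
  level_injective v w h := S.level_injective (by
    have hv := S.le_top v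
    have hw := S.le_top w
    dsimp only at h
    omega)
  level_lt e := by
    have hlt := S.level_lt e
    have hle := S.le_top (S.tgt e)
    omega
  bot_le v := by omega
  le_top v := Nat.sub_le_sub_left (S.bot_le v) _
  src_outer := S.tgt_outer
  tgt_outer := S.src_outer
  exists_tgt_eq := S.exists_src_eq
  exists_src_eq := S.exists_tgt_eq

/-- Two edges overlap if their open intervals of levels meet. -/
def Overlap (e e' : E) : Prop :=
  S.level (S.src e) < S.level (S.tgt e') ∧ S.level (S.src e') < S.level (S.tgt e)

/-- The edge `e` passes the level of the vertex `v`. -/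
def Passes (e : E) (v : V) : Prop :=
  S.level (S.src e) < S.level v ∧ S.level v < S.level (S.tgt e)

variable {S} {e e' : E} {v w : V}

theorem ends_reverse : S.reverse.ends = S.ends := funext fun _ => Sym2.eq_swap

theorem level_reverse_lt : S.reverse.level v < S.reverse.level w ↔ S.level w < S.level v := by
  have hv := S.le_top v
  have hw := S.le_top w
  change S.level S.top - S.level v < S.level S.top - S.level w ↔ _
  omega

theorem src_mem_ends (e : E) : S.src e ∈ S.ends e := Sym2.mem_mk_left _ _

theorem tgt_mem_ends (e : E) : S.tgt e ∈ S.ends e := Sym2.mem_mk_right _ _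

theorem mem_ends : v ∈ S.ends e ↔ v = S.src e ∨ v = S.tgt e := Sym2.mem_iff

theorem level_src_le_of_mem_ends (h : v ∈ S.ends e) : S.level (S.src e) ≤ S.level v := by
  rcases mem_ends.1 h with rfl | rfl
  exacts [le_rfl, (S.level_lt e).le]

theorem level_le_tgt_of_mem_ends (h : v ∈ S.ends e) : S.level v ≤ S.level (S.tgt e) := by
  rcases mem_ends.1 h with rfl | rfl
  exacts [(S.level_lt e).le, le_rfl]

theorem Overlap.symm (h : S.Overlap e e') : S.Overlap e' e := And.symm h

theorem Passes.ne_bot (h : S.Passes e v) : v ≠ S.bot := by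
  rintro rfl
  exact (h.1.trans_le (S.bot_le _)).false

theorem Passes.ne_top (h : S.Passes e v) : v ≠ S.top := by
  rintro rfl
  exact (h.2.trans_le (S.le_top _)).false

theorem Passes.notMem_ends (h : S.Passes e v) : v ∉ S.ends e := by
  intro hv
  rcases mem_ends.1 hv with rfl | rfl
  exacts [h.1.false, h.2.false]

theorem Passes.notMem_ends_outer (h : S.Passes e v) : v ∉ S.ends S.outer := by
  rw [mem_ends, S.src_outer, S.tgt_outer]
  exact not_or.2 ⟨h.ne_bot, h.ne_top⟩

theorem Passes.overlap_of_mem_ends (h : S.Passes e v) (hv : v ∈ S.ends e') : S.Overlap e e' :=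
  ⟨h.1.trans_le (level_le_tgt_of_mem_ends hv), (level_src_le_of_mem_ends hv).trans_lt h.2⟩

end STGraph

/-! ### The left-to-right order of edges -/

namespace STGraph

section Paths

variable {V E : Type*} (S : STGraph V E)

open Classical in
/-- The first edge of a descending path from `v` to the lowest vertex, and the outer edge if `v` is
the lowest vertex. -/
noncomputable def enter (v : V) : E :=
  if h : v = S.bot then S.outer else (S.exists_tgt_eq v h).choose

theorem enter_bot : S.enter S.bot = S.outer := dif_pos rfl

variable {S} {e : E} {v : V}

theorem tgt_enter (h : v ≠ S.bot) : S.tgt (S.enter v) = v := by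
  rw [enter, dif_neg h]
  exact (S.exists_tgt_eq v h).choose_spec

theorem level_src_enter_lt (h : v ≠ S.bot) : S.level (S.src (S.enter v)) < S.level v := by
  conv_rhs => rw [← tgt_enter h]
  exact S.level_lt _

theorem tgt_ne_bot (e : E) : S.tgt e ≠ S.bot := fun h =>
  (S.bot_le (S.src e)).not_gt (h ▸ S.level_lt e)

theorem src_ne_top (e : E) : S.src e ≠ S.top := fun h =>
  (S.le_top (S.tgt e)).not_gt (h ▸ S.level_lt e)

theorem mem_ends_enter (v : V) : v ∈ S.ends (S.enter v) := by
  by_cases hbot : v = S.bot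
  · rw [hbot, enter_bot, mem_ends]
    exact Or.inl S.src_outer.symm
  · exact mem_ends.2 (Or.inr (tgt_enter hbot).symm)

theorem ne_enter_of_src_eq (h : S.src e = v) (he : e ≠ S.outer) : e ≠ S.enter v := by
  rintro rfl
  by_cases hbot : v = S.bot
  · exact he (hbot ▸ S.enter_bot)
  · exact (level_src_enter_lt hbot).ne (congrArg S.level h)

variable (S) [DecidableEq E]

open Classical in
/-- The mod-2 chain of a descending path from `v` to the lowest vertex. -/
noncomputable def down (v : V) : E → ZMod 2 :=
  if _ : v = S.bot then 0 else Pi.single (S.enter v) 1 + down (S.src (S.enter v))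
termination_by S.level v
decreasing_by exact level_src_enter_lt ‹_›

/-- The mod-2 chain of an ascending path from `v` to the highest vertex. -/
noncomputable def up (v : V) : E → ZMod 2 := S.reverse.down v

theorem down_bot : S.down S.bot = 0 := by rw [down, dif_pos rfl]

variable {S}

theorem down_of_ne (h : v ≠ S.bot) :
    S.down v = Pi.single (S.enter v) 1 + S.down (S.src (S.enter v)) := by
  rw [down, dif_neg h]

theorem down_apply_eq_zero {v : V} (h : S.level v < S.level (S.tgt e)) : S.down v e = 0 := by
  by_cases hv : v = S.bot
  · rw [hv, down_bot, Pi.zero_apply]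
  · have hne : e ≠ S.enter v := by
      rintro rfl
      exact (tgt_enter hv ▸ h).false
    rw [down_of_ne hv, Pi.add_apply, Pi.single_eq_of_ne hne,
      down_apply_eq_zero ((level_src_enter_lt hv).trans h), add_zero]
termination_by S.level v
decreasing_by exact level_src_enter_lt hv

theorem down_tgt_apply_self (e : E) :
    S.down (S.tgt e) e = (Pi.single (S.enter (S.tgt e)) 1 : E → ZMod 2) e := by
  rw [down_of_ne (tgt_ne_bot e), Pi.add_apply,
    down_apply_eq_zero (level_src_enter_lt (tgt_ne_bot e)), add_zero]

theorem up_apply_eq_zero (h : S.level (S.src e) < S.level v) : S.up v e = 0 :=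
  down_apply_eq_zero (S := S.reverse) (level_reverse_lt.2 h)

variable [Fintype E]

theorem chainBoundary_down (v : V) (F : V → ZMod 2) :
    chainBoundary S.ends (S.down v) F = F v + F S.bot := by
  by_cases hv : v = S.bot
  · rw [hv, down_bot, chainBoundary_zero, CharTwo.add_self_eq_zero]
  · rw [down_of_ne hv, chainBoundary_add, chainBoundary_single, chainBoundary_down, ends,
      edgeSum_mk, tgt_enter hv]
    linear_combination F (S.src (S.enter v)) * CharTwo.two_eq_zero (R := ZMod 2)
termination_by S.level v
decreasing_by exact level_src_enter_lt hv

theorem chainBoundary_up (v : V) (F : V → ZMod 2) :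
    chainBoundary S.ends (S.up v) F = F v + F S.top :=
  ends_reverse (S := S) ▸ chainBoundary_down (S := S.reverse) v F

end Paths

section Cycles

variable {V E : Type*} [DecidableEq E] (S : STGraph V E)

/-- The mod-2 chain of the edge `e`, a descending path from its source to the lowest vertex, an
ascending path from its target to the highest vertex, and the outer edge. -/
noncomputable def cycle (e : E) : E → ZMod 2 :=
  S.down (S.src e) + Pi.single e 1 + S.up (S.tgt e) + Pi.single S.outer 1

/-- The mod-2 chain of the edge `e` and of descending paths from both its ends. -/
noncomputable def lowerCycle (e : E) : E → ZMod 2 :=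
  S.down (S.src e) + Pi.single e 1 + S.down (S.tgt e)

variable {S} {e e' o x z : E} {v : V}

theorem cycle_apply_eq_zero (h : S.Overlap e x) (hxe : x ≠ e) (hxo : x ≠ S.outer) :
    S.cycle e x = 0 := by
  simp only [cycle, Pi.add_apply, down_apply_eq_zero h.1, up_apply_eq_zero h.2,
    Pi.single_eq_of_ne hxe, Pi.single_eq_of_ne hxo, add_zero]

theorem Passes.cycle_apply_eq_zero (h : S.Passes e v) (hv : v ∈ S.ends x) : S.cycle e x = 0 :=
  STGraph.cycle_apply_eq_zero (h.overlap_of_mem_ends hv) (fun hx => h.notMem_ends (hx ▸ hv))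
    fun hx => h.notMem_ends_outer (hx ▸ hv)

theorem level_tgt_le_of_lowerCycle_apply_ne_zero (h : S.lowerCycle e z ≠ 0) :
    S.level (S.tgt z) ≤ S.level (S.tgt e) := by
  contrapose! h
  have hne : z ≠ e := fun hz => (hz ▸ h).false
  simp only [lowerCycle, Pi.add_apply, down_apply_eq_zero h,
    down_apply_eq_zero ((S.level_lt e).trans h), Pi.single_eq_of_ne hne, add_zero]

theorem level_src_le_of_reverse_lowerCycle_apply_ne_zero (h : S.reverse.lowerCycle e z ≠ 0) :
    S.level (S.src e) ≤ S.level (S.src z) :=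
  not_lt.1 fun hlt =>
    (level_tgt_le_of_lowerCycle_apply_ne_zero h).not_gt (level_reverse_lt.2 hlt)

theorem cycle_add_cycle_of_tgt_eq_src (h : S.tgt e = S.src o) :
    S.cycle e + S.cycle o = S.lowerCycle e + S.reverse.lowerCycle o := by
  ext z
  simp only [cycle, lowerCycle, h, Pi.add_apply]
  change _ = _ + (S.up (S.tgt o) z + _ + S.up (S.src o) z)
  linear_combination
    (Pi.single S.outer 1 : E → ZMod 2) z * CharTwo.two_eq_zero (R := ZMod 2)

theorem cycle_apply_of_mem_ends (hz : S.src e ∈ S.ends z) :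
    S.cycle e z =
      (Pi.single e 1 : E → ZMod 2) z + (Pi.single (S.enter (S.src e)) 1 : E → ZMod 2) z := by
  have hup : S.up (S.tgt e) z = 0 :=
    up_apply_eq_zero ((level_src_le_of_mem_ends hz).trans_lt (S.level_lt e))
  simp only [cycle, Pi.add_apply, hup, add_zero]
  by_cases hbot : S.src e = S.bot
  · rw [hbot, down_bot, enter_bot, Pi.zero_apply, zero_add]
  · have hzo : z ≠ S.outer := by
      rintro rfl
      rcases mem_ends.1 hz with h | h
      · exact hbot (h.trans S.src_outer)
      · exact src_ne_top e (h.trans S.tgt_outer)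
    rw [Pi.single_eq_of_ne hzo, add_zero, add_comm]
    congr 1
    rcases mem_ends.1 hz with h | h
    · rw [h, down_apply_eq_zero (S.level_lt z), Pi.single_eq_of_ne (ne_enter_of_src_eq rfl hzo)]
    · rw [h, down_tgt_apply_self]

theorem level_src_le_of_cycle_add_cycle_apply_ne_zero (h : S.src e = S.src e')
    (hz : (S.cycle e + S.cycle e') z ≠ 0) : S.level (S.src e) ≤ S.level (S.src z) := by
  contrapose! hz
  have hlt := hz.trans (S.level_lt e)
  have hlt' := (h ▸ hz).trans (S.level_lt e')
  have hne : z ≠ e := fun he => (he ▸ hz).false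
  have hne' : z ≠ e' := fun he => (he ▸ h ▸ hz).false
  simp only [cycle, Pi.add_apply, up_apply_eq_zero hlt, up_apply_eq_zero hlt', h,
    Pi.single_eq_of_ne hne, Pi.single_eq_of_ne hne', add_zero]
  exact CharTwo.add_self_eq_zero _

variable [Fintype E]

theorem isEdgeCycle_cycle (e : E) : IsEdgeCycle S.ends (S.cycle e) := fun F => by
  simp only [cycle, chainBoundary_add, chainBoundary_down, chainBoundary_up, chainBoundary_single,
    ends, edgeSum_mk, S.src_outer, S.tgt_outer]
  linear_combination
    (F (S.src e) + F (S.tgt e) + F S.bot + F S.top) * CharTwo.two_eq_zero (R := ZMod 2)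

theorem isEdgeCycle_lowerCycle (e : E) : IsEdgeCycle S.ends (S.lowerCycle e) := fun F => by
  simp only [lowerCycle, chainBoundary_add, chainBoundary_down, chainBoundary_single, ends,
    edgeSum_mk]
  linear_combination
    (F (S.src e) + F (S.tgt e) + F S.bot) * CharTwo.two_eq_zero (R := ZMod 2)

theorem isEdgeCycle_reverse_lowerCycle (e : E) :
    IsEdgeCycle S.ends (S.reverse.lowerCycle e) :=
  ends_reverse (S := S) ▸ isEdgeCycle_lowerCycle (S := S.reverse) e

end Cycles

section Side

variable {V E : Type*} [Fintype E] {S : STGraph V E} {L : LocalCrossings V E} {c : E → ZMod 2}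

theorem parity_eq_zero_of_lt_src (hL : L.IsPlanar S.ends S.outer) (hc : IsEdgeCycle S.ends c)
    {v : V} (hv : ∀ z, c z ≠ 0 → S.level v < S.level (S.src z)) (e : E) :
    L.parity S.ends c v e = 0 := by
  have hoff : ∀ z, c z ≠ 0 → v ∉ S.ends z := fun z hz hmem =>
    (level_src_le_of_mem_ends hmem).not_gt (hv z hz)
  by_cases hbot : v = S.bot
  · have hmem : v ∈ S.ends S.outer := mem_ends.2 (Or.inl (hbot.trans S.src_outer.symm))
    rw [LocalCrossings.parity_congr_of_notMem hoff e S.outer]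
    exact hL.parity_outer c hc (not_not.1 fun h => hoff _ h hmem) v hmem
  · obtain ⟨d, hd⟩ := S.exists_tgt_eq v hbot
    have hmem : v ∈ S.ends d := hd ▸ tgt_mem_ends d
    have hlt : S.level (S.src d) < S.level v := hd ▸ S.level_lt d
    rw [LocalCrossings.parity_congr_of_notMem hoff e d, hL.parity_eq c hc d
      (not_not.1 fun h => hoff _ h hmem) v hmem _ (src_mem_ends d)]
    exact parity_eq_zero_of_lt_src hL hc (fun z hz => hlt.trans (hv z hz)) d
termination_by S.level v

theorem parity_eq_zero_of_tgt_lt (hL : L.IsPlanar S.ends S.outer) (hc : IsEdgeCycle S.ends c)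
    {v : V} (hv : ∀ z, c z ≠ 0 → S.level (S.tgt z) < S.level v) (e : E) :
    L.parity S.ends c v e = 0 := by
  rw [← ends_reverse] at hL hc ⊢
  exact parity_eq_zero_of_lt_src (S := S.reverse) hL hc (fun z hz => level_reverse_lt.2 (hv z hz)) e

variable (S L) [DecidableEq E]

/-- The parity of the cycle through `e` to the right of the source of `e'`. For overlapping edges
other than the outer edge, it tells on which side of `e` the edge `e'` lies. -/
noncomputable def side (e e' : E) : ZMod 2 := L.parity S.ends (S.cycle e) (S.src e') e'

variable {S L} {e e' o : E} {v : V}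

theorem side_eq_side_of_passes_left (hL : L.IsPlanar S.ends S.outer) (he : S.tgt e = v)
    (ho : S.src o = v) (hv : S.Passes e' v) : S.side L e e' = S.side L o e' := by
  refine CharTwo.add_eq_zero.1 ?_
  have hupper : L.parity S.ends (S.reverse.lowerCycle o) (S.src e') e' = 0 :=
    parity_eq_zero_of_lt_src hL (isEdgeCycle_reverse_lowerCycle o) (fun z hz =>
      (ho ▸ hv.1).trans_le (level_src_le_of_reverse_lowerCycle_apply_ne_zero hz)) e'
  have hlt : ∀ z, S.lowerCycle e z ≠ 0 → S.level (S.tgt z) < S.level (S.tgt e') := fun z hz =>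
    (level_tgt_le_of_lowerCycle_apply_ne_zero hz).trans_lt (he ▸ hv.2)
  have hlower : L.parity S.ends (S.lowerCycle e) (S.src e') e' = 0 := by
    rw [hL.parity_eq _ (isEdgeCycle_lowerCycle e) e' (not_not.1 fun h => (hlt e' h).false) _
      (src_mem_ends e') _ (tgt_mem_ends e')]
    exact parity_eq_zero_of_tgt_lt hL (isEdgeCycle_lowerCycle e) hlt e'
  rw [side, side, ← LocalCrossings.parity_add, cycle_add_cycle_of_tgt_eq_src (he.trans ho.symm),
    LocalCrossings.parity_add, hlower, hupper, add_zero]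

theorem side_eq_side_of_passes_right (hL : L.IsPlanar S.ends S.outer) (he : S.tgt e = v)
    (ho : S.src o = v) (hv : S.Passes e' v) : S.side L e' e = S.side L e' o := by
  have hmem : v ∈ S.ends e := he ▸ tgt_mem_ends e
  rw [side, side, ho, hL.parity_eq _ (isEdgeCycle_cycle e') e (hv.cycle_apply_eq_zero hmem) _
    (src_mem_ends e) v hmem]
  exact LocalCrossings.parity_congr_of_notMem
    (fun z hz hmem => hz (hv.cycle_apply_eq_zero hmem)) e o

theorem parity_cycle (e x : E) :
    L.parity S.ends (S.cycle e) (S.src e) x = ∑ z, S.cycle e z * L.cross (S.src e) z +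
      (L.turn (S.src e) x e + L.turn (S.src e) x (S.enter (S.src e))) := by
  rw [LocalCrossings.parity_eq_sum_cross_add_sum_turn]
  congr 1
  have hterm : ∀ z, S.cycle e z * (iverson (S.src e ∈ S.ends z) * L.turn (S.src e) x z) =
      (Pi.single e 1 : E → ZMod 2) z * (iverson (S.src e ∈ S.ends z) * L.turn (S.src e) x z) +
      (Pi.single (S.enter (S.src e)) 1 : E → ZMod 2) z *
        (iverson (S.src e ∈ S.ends z) * L.turn (S.src e) x z) := fun z => by
    by_cases hz : S.src e ∈ S.ends z
    · rw [cycle_apply_of_mem_ends hz, add_mul]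
    · simp only [iverson_false hz, zero_mul, mul_zero, add_zero]
  rw [Finset.sum_congr rfl fun z _ => hterm z, Finset.sum_add_distrib, sum_single_one_mul,
    sum_single_one_mul, iverson_true (src_mem_ends e),
    iverson_true (mem_ends_enter _), one_mul, one_mul]

theorem parity_cycle_enter_eq (hL : L.IsPlanar S.ends S.outer) (he : S.src e = v)
    (he' : S.src e' = v) (heo : e ≠ S.outer) (heo' : e' ≠ S.outer) :
    L.parity S.ends (S.cycle e) v (S.enter v) = L.parity S.ends (S.cycle e') v (S.enter v) := by
  refine CharTwo.add_eq_zero.1 ?_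
  rw [← LocalCrossings.parity_add]
  have hcycle := (isEdgeCycle_cycle (S := S) e).add (isEdgeCycle_cycle e')
  have hmem : v ∈ S.ends (S.enter v) := mem_ends_enter v
  have henter : ∀ x, S.src x = v → x ≠ S.outer → S.cycle x (S.enter v) = 1 := by
    rintro x rfl hxo
    rw [cycle_apply_of_mem_ends hmem, Pi.single_eq_same,
      Pi.single_eq_of_ne (ne_enter_of_src_eq rfl hxo).symm, zero_add]
  have hzero : (S.cycle e + S.cycle e') (S.enter v) = 0 := by
    rw [Pi.add_apply, henter e he heo, henter e' he' heo', CharTwo.add_self_eq_zero]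
  by_cases hbot : v = S.bot
  · rw [hbot, enter_bot] at hzero hmem ⊢
    exact hL.parity_outer _ hcycle hzero _ hmem
  · rw [hL.parity_eq _ hcycle _ hzero v hmem _ (src_mem_ends _)]
    refine parity_eq_zero_of_lt_src hL hcycle (fun z hz => ?_) _
    exact (level_src_enter_lt hbot).trans_le
      (he ▸ level_src_le_of_cycle_add_cycle_apply_ne_zero (he.trans he'.symm) hz)

theorem side_eq_of_src_eq (hL : L.IsPlanar S.ends S.outer) (he : S.src e = v)
    (he' : S.src e' = v) (heo' : e' ≠ S.outer) (hne : e ≠ e') :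
    S.side L e e' = L.parity S.ends (S.cycle e) v (S.enter v) +
      iverson (L.rotationKey v (S.enter v) e < L.rotationKey v (S.enter v) e') := by
  subst he
  rw [← hL.turn_add_turn_add_turn (mem_ends_enter _) (src_mem_ends e)
    (he' ▸ src_mem_ends e') (ne_enter_of_src_eq he' heo') hne, side, he', parity_cycle,
    parity_cycle]
  have hself : L.turn (S.src e) (S.enter (S.src e)) (S.enter (S.src e)) = 0 :=
    iverson_false fun h => h.2.false
  rw [hself]
  linear_combination
    (-L.turn (S.src e) (S.enter (S.src e)) e) * CharTwo.two_eq_zero (R := ZMod 2)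

end Side

end STGraph

/-- The relation `r` restricts to a strict total order on the set `s`. -/
structure IsStrictTotalOn {α : Type*} (r : α → α → Prop) (s : Set α) : Prop where
  irrefl : ∀ a ∈ s, ¬ r a a
  total : ∀ a ∈ s, ∀ b ∈ s, a ≠ b → (r a b ↔ ¬ r b a)
  trans : ∀ a ∈ s, ∀ b ∈ s, ∀ c ∈ s, r a b → r b c → r a c

namespace IsStrictTotalOn

variable {α β : Type*} {r : α → α → Prop} {s t : Set α} {m : α}

theorem mono (h : IsStrictTotalOn r t) (hst : s ⊆ t) : IsStrictTotalOn r s where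
  irrefl a ha := h.irrefl a (hst ha)
  total a ha b hb := h.total a (hst ha) b (hst hb)
  trans a ha b hb c hc := h.trans a (hst ha) b (hst hb) c (hst hc)

theorem of_injOn [LinearOrder β] {f : α → β} (hf : Set.InjOn f s)
    (hr : ∀ a ∈ s, ∀ b ∈ s, r a b ↔ f a < f b) : IsStrictTotalOn r s where
  irrefl a ha h := ((hr a ha a ha).1 h).false
  total a ha b hb hab := by
    rw [hr a ha b hb, hr b hb a ha, not_lt]
    exact (Ne.le_iff_lt fun h => hab (hf ha hb h)).symm
  trans a ha b hb c hc hab hbc :=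
    (hr a ha c hc).2 (((hr a ha b hb).1 hab).trans ((hr b hb c hc).1 hbc))

theorem insert_max (h : IsStrictTotalOn r s) (hm : ∀ a ∈ s, r a m) (hm' : ∀ a, ¬ r m a) :
    IsStrictTotalOn r (insert m s) where
  irrefl := by
    rintro a (rfl | ha)
    exacts [hm' a, h.irrefl a ha]
  total := by
    rintro a (rfl | ha) b (rfl | hb) hab
    · exact (hab rfl).elim
    · exact iff_of_false (hm' b) (not_not.2 (hm b hb))
    · exact iff_of_true (hm a ha) (hm' a)
    · exact h.total a ha b hb hab
  trans := by
    rintro a ha b (rfl | hb) c hc hab hbc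
    · exact (hm' c hbc).elim
    · have ha' : a ∈ s := ha.resolve_left fun h => hm' b (h ▸ hab)
      rcases hc with rfl | hc
      exacts [hm a ha', h.trans a ha' b hb c hc hab hbc]

theorem substitute (ht : IsStrictTotalOn r t) (hs : IsStrictTotalOn r (insert m s)) (hm : m ∉ s)
    (hleft : ∀ a ∈ t, ∀ p ∈ s, r a p ↔ r m p) (hright : ∀ a ∈ t, ∀ p ∈ s, r p a ↔ r p m) :
    IsStrictTotalOn r (t ∪ s) where
  irrefl := by
    rintro a (ha | ha)
    exacts [ht.irrefl a ha, hs.irrefl a (Or.inr ha)]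
  total := by
    have hmp : ∀ p ∈ s, r m p ↔ ¬ r p m := fun p hp =>
      hs.total m (Or.inl rfl) p (Or.inr hp) fun h => hm (h ▸ hp)
    rintro a (ha | ha) b (hb | hb) hab
    · exact ht.total a ha b hb hab
    · rw [hleft a ha b hb, hright a ha b hb, hmp b hb]
    · rw [hleft b hb a ha, hright b hb a ha, hmp a ha, not_not]
    · exact hs.total a (Or.inr ha) b (Or.inr hb) hab
  trans := by
    have htrans := hs.trans
    have htotal := hs.total
    have hirrefl := hs.irrefl
    simp only [Set.mem_insert_iff] at htrans htotal hirrefl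
    rintro a (ha | ha) b (hb | hb) c (hc | hc) hab hbc
    · exact ht.trans a ha b hb c hc hab hbc
    all_goals grind

end IsStrictTotalOn

namespace STGraph

section EdgeOrder

variable {V E : Type*} (S : STGraph V E)

/-- The edges meeting the horizontal line just below level `n`. -/
def crossing (n : ℕ) : Set E := {e | S.level (S.src e) < n ∧ n ≤ S.level (S.tgt e)}

/-- A left-to-right order of the edges meeting a common horizontal line, in which an edge passing a
vertex lies on the same side of its incoming and its outgoing edges. -/
structure EdgeOrder where
  lt : E → E → Prop
  isStrictTotalOn_crossing : ∀ n, IsStrictTotalOn lt (S.crossing n)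
  lt_iff_lt_left : ∀ v e o x, S.tgt e = v → S.src o = v → S.Passes x v → (lt e x ↔ lt o x)

variable {S} {e e' o x : E} {v : V} {n : ℕ}

theorem crossing_level_succ (v : V) :
    S.crossing (S.level v + 1) = {e | S.src e = v} ∪ {e | S.Passes e v} := by
  ext e
  have hsrc : S.src e = v ↔ S.level (S.src e) = S.level v := S.level_injective.eq_iff.symm
  have hlt := S.level_lt e
  simp only [crossing, Passes, Set.mem_union, Set.mem_ofPred_eq, hsrc]
  omega

theorem crossing_succ_subset (hn : ∀ v, S.level v ≠ n) : S.crossing (n + 1) ⊆ S.crossing n :=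
  fun _ he => ⟨(Nat.lt_succ_iff.1 he.1).lt_of_ne (hn _), (Nat.le_succ n).trans he.2⟩

variable [Fintype E] [DecidableEq E] {L : LocalCrossings V E}

variable (S L) in
/-- The edge `e` lies to the left of the edge `e'`; the outer edge is the rightmost one. -/
def IsLeftOf (e e' : E) : Prop := e ≠ e' ∧ e ≠ S.outer ∧ (e' = S.outer ∨ S.side L e e' = 1)

theorem isLeftOf_iff_isLeftOf_left (hL : L.IsPlanar S.ends S.outer) (he : S.tgt e = v)
    (ho : S.src o = v) (hx : S.Passes x v) : S.IsLeftOf L e x ↔ S.IsLeftOf L o x := by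
  have hev : v ∈ S.ends e := he ▸ tgt_mem_ends e
  have hov : v ∈ S.ends o := ho ▸ src_mem_ends o
  have hne : ∀ z, v ∈ S.ends z → z ≠ x ∧ z ≠ S.outer := fun z hz =>
    ⟨fun h => hx.notMem_ends (h ▸ hz), fun h => hx.notMem_ends_outer (h ▸ hz)⟩
  simp only [IsLeftOf, ne_eq, hne e hev, hne o hov, not_false_eq_true,
    side_eq_side_of_passes_left hL he ho hx]

theorem isLeftOf_iff_isLeftOf_right (hL : L.IsPlanar S.ends S.outer) (he : S.tgt e = v)
    (ho : S.src o = v) (hx : S.Passes x v) : S.IsLeftOf L x e ↔ S.IsLeftOf L x o := by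
  have hev : v ∈ S.ends e := he ▸ tgt_mem_ends e
  have hov : v ∈ S.ends o := ho ▸ src_mem_ends o
  have hne : ∀ z, v ∈ S.ends z → x ≠ z ∧ z ≠ S.outer := fun z hz =>
    ⟨fun h => hx.notMem_ends (h ▸ hz), fun h => hx.notMem_ends_outer (h ▸ hz)⟩
  simp only [IsLeftOf, ne_eq, hne e hev, hne o hov, not_false_eq_true,
    side_eq_side_of_passes_right hL he ho hx]

theorem isLeftOf_iff (hL : L.IsPlanar S.ends S.outer) (he : S.src e = v) (he' : S.src e' = v)
    (heo : e ≠ S.outer) (heo' : e' ≠ S.outer) (hne : e ≠ e') :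
    S.IsLeftOf L e e' ↔ (L.parity S.ends (S.cycle e) v (S.enter v) = 1 ↔
      ¬ L.rotationKey v (S.enter v) e < L.rotationKey v (S.enter v) e') := by
  simp only [IsLeftOf, ne_eq, hne, heo, heo', not_false_eq_true, true_and, false_or,
    side_eq_of_src_eq hL he he' heo' hne]
  generalize L.parity S.ends (S.cycle e) v (S.enter v) = k
  by_cases h : L.rotationKey v (S.enter v) e < L.rotationKey v (S.enter v) e'
  · rw [iverson_true h, not_not.2 h |> iff_false_right]
    revert k
    decide
  · rw [iverson_false h, add_zero, iff_true_right h]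

/- The edges leaving `v` are ordered as in the rotation at `v` starting from the edge entering `v`,
either forwards or backwards. -/
theorem isStrictTotalOn_isLeftOf_src (hL : L.IsPlanar S.ends S.outer) (v : V) :
    IsStrictTotalOn (S.IsLeftOf L) {e | S.src e = v} := by
  set s : Set E := {e | S.src e = v ∧ e ≠ S.outer}
  have hsub : {e | S.src e = v} ⊆ insert S.outer s := fun e he =>
    or_iff_not_imp_left.2 fun h => ⟨he, h⟩
  refine (IsStrictTotalOn.insert_max ?_ (fun e he => ⟨he.2, he.2, Or.inl rfl⟩)
    fun e he => he.2.1 rfl).mono hsub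
  set key := L.rotationKey v (S.enter v)
  have hinj : Set.InjOn key s := hL.injOn_rotationKey fun e he => he.1 ▸ src_mem_ends e
  obtain ⟨p, hp⟩ : ∃ p : Prop, ∀ e ∈ s, L.parity S.ends (S.cycle e) v (S.enter v) = 1 ↔ p := by
    rcases s.eq_empty_or_nonempty with h | ⟨d, hd⟩
    · exact ⟨True, fun e he => (h ▸ he : e ∈ (∅ : Set E)).elim⟩
    · exact ⟨_, fun e he => by rw [parity_cycle_enter_eq hL he.1 hd.1 he.2 hd.2]⟩
  have hlt : ∀ e ∈ s, ∀ e' ∈ s, e ≠ e' → (S.IsLeftOf L e e' ↔ (p ↔ ¬ key e < key e')) :=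
    fun e he e' he' hne => by rw [isLeftOf_iff hL he.1 he'.1 he.2 he'.2 hne, hp e he]
  by_cases h : p
  · refine IsStrictTotalOn.of_injOn (f := OrderDual.toDual ∘ key)
      (OrderDual.toDual.injective.comp_injOn hinj) fun e he e' he' => ?_
    rcases eq_or_ne e e' with rfl | hne
    · exact iff_of_false (fun h => h.1 rfl) (lt_irrefl _)
    · rw [hlt e he e' he' hne, iff_true_left h, not_lt,
        Ne.le_iff_lt fun h => hne (hinj he' he h).symm]
      rfl
  · refine IsStrictTotalOn.of_injOn hinj fun e he e' he' => ?_
    rcases eq_or_ne e e' with rfl | hne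
    · exact iff_of_false (fun h => h.1 rfl) (lt_irrefl _)
    · rw [hlt e he e' he' hne, iff_false_left h, not_not]

theorem isStrictTotalOn_isLeftOf_crossing (hL : L.IsPlanar S.ends S.outer) (n : ℕ) :
    IsStrictTotalOn (S.IsLeftOf L) (S.crossing n) := by
  induction n with
  | zero =>
    have hempty : S.crossing 0 = ∅ :=
      Set.eq_empty_of_forall_notMem fun _ h => Nat.not_lt_zero _ h.1
    rw [hempty]
    exact ⟨fun _ => False.elim, fun _ => False.elim, fun _ => False.elim⟩
  | succ n ih =>
    by_cases hn : ∃ v, S.level v = n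
    · obtain ⟨v, rfl⟩ := hn
      rw [crossing_level_succ]
      by_cases hbot : v = S.bot
      · have hempty : {e | S.Passes e v} = ∅ :=
          Set.eq_empty_of_forall_notMem fun e he => he.ne_bot hbot
        rw [hempty, Set.union_empty]
        exact isStrictTotalOn_isLeftOf_src hL v
      · have hm : S.tgt (S.enter v) = v := tgt_enter hbot
        have hsub : insert (S.enter v) {e | S.Passes e v} ⊆ S.crossing (S.level v) := by
          rintro e (rfl | he)
          exacts [⟨level_src_enter_lt hbot, (congrArg S.level hm).ge⟩, ⟨he.1, he.2.le⟩]
        exact (isStrictTotalOn_isLeftOf_src hL v).substitute (ih.mono hsub)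
          (fun h => h.2.ne (congrArg S.level hm).symm)
          (fun e he x hx => (isLeftOf_iff_isLeftOf_left hL hm he hx).symm)
          (fun e he x hx => (isLeftOf_iff_isLeftOf_right hL hm he hx).symm)
    · exact ih.mono (crossing_succ_subset fun v h => hn ⟨v, h⟩)

theorem nonempty_edgeOrder {V E : Type*} [Fintype E] {S : STGraph V E} {L : LocalCrossings V E}
    (hL : L.IsPlanar S.ends S.outer) : Nonempty S.EdgeOrder := by
  classical
  exact ⟨⟨S.IsLeftOf L, isStrictTotalOn_isLeftOf_crossing hL,
    fun _ _ _ _ => isLeftOf_iff_isLeftOf_left hL⟩⟩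

end EdgeOrder

end STGraph

section Rank

open Finset

variable {α : Type*} {r : α → α → Prop} {T : Finset α} {a b : α}

open Classical in
/-- The number of elements of `T` below `a`. -/
noncomputable def rank (r : α → α → Prop) (T : Finset α) (a : α) : ℕ := #{z ∈ T | r z a}

namespace IsStrictTotalOn

theorem rank_lt_card (h : IsStrictTotalOn r T) (ha : a ∈ T) : rank r T a < #T := by
  classical
  exact card_lt_card (filter_ssubset.2 ⟨a, ha, h.irrefl a ha⟩)

theorem rank_lt_rank (h : IsStrictTotalOn r T) (ha : a ∈ T) (hb : b ∈ T) (hab : r a b) :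
    rank r T a < rank r T b := by
  classical
  refine card_lt_card ((ssubset_iff_of_subset fun z hz => ?_).2 ⟨a, ?_, ?_⟩)
  · rw [mem_filter] at hz ⊢
    exact ⟨hz.1, h.trans z hz.1 a ha b hb hz.2 hab⟩
  · exact mem_filter.2 ⟨ha, hab⟩
  · exact fun haa => h.irrefl a ha (mem_filter.1 haa).2

theorem rel_or_rel (h : IsStrictTotalOn r T) (ha : a ∈ T) (hb : b ∈ T) (hab : a ≠ b) :
    r a b ∨ r b a := by
  rw [h.total a ha b hb hab]
  exact (em _).symm

theorem injOn_rank (h : IsStrictTotalOn r T) : Set.InjOn (rank r T) T := by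
  intro a ha b hb hab
  by_contra hne
  rcases h.rel_or_rel ha hb hne with hr | hr
  · exact (h.rank_lt_rank ha hb hr).ne hab
  · exact (h.rank_lt_rank hb ha hr).ne' hab

theorem rank_lt_rank_iff (h : IsStrictTotalOn r T) (ha : a ∈ T) (hb : b ∈ T) :
    rank r T a < rank r T b ↔ r a b := by
  refine ⟨fun hlt => ?_, h.rank_lt_rank ha hb⟩
  have hab : a ≠ b := fun hab => (hab ▸ hlt).false
  exact (h.rel_or_rel ha hb hab).resolve_right fun hba => (h.rank_lt_rank hb ha hba).not_gt hlt

theorem exists_rank_eq (h : IsStrictTotalOn r T) {j : ℕ} (hj : j < #T) :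
    ∃ a ∈ T, rank r T a = j := by
  have hmaps : Set.MapsTo (rank r T) T (range #T) := fun a ha => mem_coe.2 <|
    mem_range.2 (h.rank_lt_card ha)
  exact surjOn_of_injOn_of_card_le _ hmaps h.injOn_rank (card_range _).le
    (mem_coe.2 (mem_range.2 hj))

end IsStrictTotalOn

end Rank

/-! ### Ports -/

namespace STGraph

open Finset

variable {V E : Type*} {S : STGraph V E} {e e' x : E} {v : V} {b : Bool}

variable (S) in
/-- The endvertex of an edge on a given side: the source for `false`, the target for `true`. -/
def endvertex (e : E) : Bool → V
  | false => S.src e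
  | true => S.tgt e

theorem endvertex_mem_ends (e : E) (b : Bool) : S.endvertex e b ∈ S.ends e := by
  cases b
  exacts [src_mem_ends e, tgt_mem_ends e]

theorem mem_ends_iff_exists_endvertex : v ∈ S.ends e ↔ ∃ b, S.endvertex e b = v := by
  rw [mem_ends, Bool.exists_bool]
  exact or_congr eq_comm eq_comm

theorem overlap_of_endvertex_eq (h : S.endvertex e b = S.endvertex e' b) : S.Overlap e e' := by
  have hlt := S.level_lt e
  have hlt' := S.level_lt e'
  cases b <;> have hl := congrArg S.level h <;> simp only [endvertex] at hl
  · exact ⟨hl ▸ hlt', hl ▸ hlt⟩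
  · exact ⟨hl ▸ hlt, hl ▸ hlt'⟩

theorem Overlap.exists_mem_crossing (h : S.Overlap e e') :
    ∃ n, e ∈ S.crossing n ∧ e' ∈ S.crossing n := by
  have hlt := S.level_lt e
  have hlt' := S.level_lt e'
  obtain ⟨h₁, h₂⟩ := h
  refine ⟨max (S.level (S.src e)) (S.level (S.src e')) + 1, ?_, ?_⟩ <;>
    simp only [crossing, Set.mem_ofPred_eq] <;> omega

theorem exists_setOf_endvertex_subset_crossing (v : V) (b : Bool) :
    ∃ n, {e | S.endvertex e b = v} ⊆ S.crossing n := by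
  cases b
  · refine ⟨S.level v + 1, ?_⟩
    rintro e rfl
    exact ⟨Nat.lt_succ_self _, S.level_lt e⟩
  · refine ⟨S.level v, ?_⟩
    rintro e rfl
    exact ⟨S.level_lt e, le_rfl⟩

section Fan

variable [Fintype E]

variable (S) in
open Classical in
/-- The edges whose endvertex on side `b` is `v`. -/
noncomputable def fan (v : V) (b : Bool) : Finset E := {e | S.endvertex e b = v}

theorem mem_fan : e ∈ S.fan v b ↔ S.endvertex e b = v := by
  classical
  exact mem_filter_univ _

theorem card_fan_add_card_fan_le {k : ℕ} (hdeg : ∀ v, {e | v ∈ S.ends e}.ncard ≤ k) (v : V)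
    (b : Bool) : #(S.fan v b) + #(S.fan v !b) ≤ k := by
  classical
  have hdisj : Disjoint (S.fan v b) (S.fan v !b) := by
    rw [disjoint_left]
    intro e he he'
    have hlt := S.level_lt e
    rw [mem_fan] at he he'
    subst he
    cases b <;> simp only [endvertex, Bool.not_true, Bool.not_false] at he' <;> rw [he'] at hlt <;>
      exact hlt.false
  rw [← card_union_of_disjoint hdisj, ← Set.ncard_coe_finset]
  refine le_trans (Set.ncard_le_ncard (fun e he => ?_) (Set.toFinite _)) (hdeg v)
  rcases mem_union.1 (mem_coe.1 he) with h | h <;>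
    exact mem_ends_iff_exists_endvertex.2 ⟨_, mem_fan.1 h⟩

/-- The number of edges using ports to the left of the vertical one, among `k` edges on one side.
With this choice, of at most six edges at a vertex none goes beyond port `3`, the horizontal ports
are used on one side at most, and port `3` only if there are no edges on the other side. -/
def leftCount (k : ℕ) : ℕ := if k ≤ 1 then 0 else if k ≤ 4 then 1 else 2

end Fan

namespace EdgeOrder

variable (O : S.EdgeOrder)

theorem lt_iff_not_lt (h : S.Overlap e e') (hne : e ≠ e') : O.lt e e' ↔ ¬ O.lt e' e := by
  obtain ⟨n, he, he'⟩ := h.exists_mem_crossing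
  exact (O.isStrictTotalOn_crossing n).total e he e' he' hne

theorem lt_iff_lt_of_passes_left (hx : S.Passes x v) (he : v ∈ S.ends e) (he' : v ∈ S.ends e') :
    O.lt e x ↔ O.lt e' x := by
  obtain ⟨i, hi⟩ := S.exists_tgt_eq v hx.ne_bot
  suffices h : ∀ z, v ∈ S.ends z → (O.lt z x ↔ O.lt i x) from (h e he).trans (h e' he').symm
  obtain ⟨o, ho⟩ := S.exists_src_eq v hx.ne_top
  intro z hz
  rcases mem_ends.1 hz with hz | hz
  · exact (O.lt_iff_lt_left v i z x hi hz.symm hx).symm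
  · exact (O.lt_iff_lt_left v z o x hz.symm ho hx).trans (O.lt_iff_lt_left v i o x hi ho hx).symm

theorem lt_iff_lt_of_passes_right (hx : S.Passes x v) (he : v ∈ S.ends e) (he' : v ∈ S.ends e') :
    O.lt x e ↔ O.lt x e' := by
  have hne : ∀ z, v ∈ S.ends z → x ≠ z := fun z hz h => hx.notMem_ends (h ▸ hz)
  rw [O.lt_iff_not_lt (hx.overlap_of_mem_ends he) (hne e he),
    O.lt_iff_not_lt (hx.overlap_of_mem_ends he') (hne e' he'), O.lt_iff_lt_of_passes_left hx he he']

variable [Fintype E]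

theorem isStrictTotalOn_fan (v : V) (b : Bool) : IsStrictTotalOn O.lt (S.fan v b) := by
  obtain ⟨n, hn⟩ := exists_setOf_endvertex_subset_crossing (S := S) v b
  exact (O.isStrictTotalOn_crossing n).mono fun e he => hn (mem_fan.1 he)

/-- The port used by `e` at its endvertex on side `b`, ports being assigned from left to right:
`0` is vertical, `±1` are the diagonals pointing forwards, `±2` is horizontal, and `3` is the
diagonal pointing backwards to the right. -/
noncomputable def port (e : E) (b : Bool) : ℤ :=
  rank O.lt (S.fan (S.endvertex e b) b) e - leftCount #(S.fan (S.endvertex e b) b)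

theorem neg_leftCount_le_port (h : S.endvertex e b = v) :
    -(leftCount #(S.fan v b) : ℤ) ≤ O.port e b := by
  subst h
  rw [port]
  omega

theorem port_lt (h : S.endvertex e b = v) :
    O.port e b < #(S.fan v b) - leftCount #(S.fan v b) := by
  have hlt := (O.isStrictTotalOn_fan v b).rank_lt_card (mem_fan.2 h)
  subst h
  rw [port]
  omega

theorem port_lt_port (h : S.endvertex e b = S.endvertex e' b) :
    O.port e b < O.port e' b ↔ O.lt e e' := by
  rw [← (O.isStrictTotalOn_fan _ b).rank_lt_rank_iff (mem_fan.2 h) (mem_fan.2 rfl), port, port, h]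
  omega

theorem exists_port_eq_zero (h : S.endvertex e b = v) :
    ∃ m, S.endvertex m b = v ∧ O.port m b = 0 := by
  have hpos : 0 < #(S.fan v b) := card_pos.2 ⟨e, mem_fan.2 h⟩
  have hlt : leftCount #(S.fan v b) < #(S.fan v b) := by
    unfold leftCount
    split_ifs <;> omega
  obtain ⟨m, hm, hrank⟩ := (O.isStrictTotalOn_fan v b).exists_rank_eq hlt
  have hmv := mem_fan.1 hm
  exact ⟨m, hmv, by rw [port, hmv, hrank, sub_self]⟩

end EdgeOrder

end STGraph

/-! ### Abscissas -/

namespace STGraph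

theorem level_lt_of_ne {V E : Type*} {S : STGraph V E} {v w : V} (hne : w ≠ v)
    (h : S.level w < S.level v + 1) : S.level w < S.level v :=
  (Nat.lt_succ_iff.1 h).lt_of_ne (S.level_injective.ne hne)

/-- Combinatorial data of an octilinear drawing: the abscissas of the vertices and of the vertical
parts of the edges, and the ports, encoded as in `EdgeOrder.port`. -/
structure Coords {V E : Type*} (S : STGraph V E) where
  vertexX : V → ℤ
  edgeX : E → ℤ
  port : E → Bool → ℤ
  neg_two_le_port : ∀ e b, -2 ≤ port e b
  port_le_three : ∀ e b, port e b ≤ 3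
  port_ne_three : ∀ e e' b, S.endvertex e b = S.endvertex e' (!b) → port e b ≠ 3
  abs_port_ne_two : ∀ e e' b, S.endvertex e b = S.endvertex e' (!b) → |port e b| = 2 →
    |port e' (!b)| ≠ 2
  port_lt_port : ∀ e e' b, S.endvertex e b = S.endvertex e' b →
    (port e b < port e' b ↔ edgeX e < edgeX e')
  port_pos : ∀ e b, 0 < port e b ↔ vertexX (S.endvertex e b) < edgeX e
  port_neg : ∀ e b, port e b < 0 ↔ edgeX e < vertexX (S.endvertex e b)
  edgeX_ne : ∀ e e', S.Overlap e e' → e ≠ e' → edgeX e ≠ edgeX e'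
  edgeX_notMem_uIcc : ∀ e e' v, S.Passes e v → v ∈ S.ends e' →
    edgeX e ∉ Set.uIcc (vertexX v) (edgeX e')

namespace EdgeOrder

variable {V E : Type*} [Fintype E] {S : STGraph V E} {O : S.EdgeOrder} {e e' m : E} {v w : V}
  {b : Bool} {n : ℕ} {c : ℤ} {x : V → ℤ} {X : E → ℤ}

variable (O) in
/-- Abscissas `x` of the vertices of level below `n` and `X` of the edges leaving them, compatible
with the order of the edges and their ports. -/
structure IsPlacement (n : ℕ) (x : V → ℤ) (X : E → ℤ) : Prop where
  lt_of_lt : ∀ e e', S.level (S.src e) < n → S.level (S.src e') < n → S.Overlap e e' →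
    O.lt e e' → X e < X e'
  port_pos : ∀ e b, S.level (S.endvertex e b) < n →
    (0 < O.port e b ↔ x (S.endvertex e b) < X e)
  port_neg : ∀ e b, S.level (S.endvertex e b) < n →
    (O.port e b < 0 ↔ X e < x (S.endvertex e b))

namespace IsPlacement

theorem lt_iff (h : O.IsPlacement n x X) (he : S.level (S.src e) < n)
    (he' : S.level (S.src e') < n) (hov : S.Overlap e e') : X e < X e' ↔ O.lt e e' := by
  refine ⟨fun hlt => ?_, h.lt_of_lt e e' he he' hov⟩
  by_contra hn
  have hne : e ≠ e' := fun hee => (hee ▸ hlt).false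
  exact hlt.not_gt (h.lt_of_lt e' e he' he hov.symm ((O.lt_iff_not_lt hov.symm hne.symm).2 hn))

theorem lt_iff_of_passes_left (h : O.IsPlacement n x X) (he : S.level (S.src e) < n)
    (hm : S.level (S.src m) < n) (hp : S.Passes e v) (hmv : v ∈ S.ends m) (hv : v ∈ S.ends e') :
    X m < X e ↔ O.lt e' e := by
  rw [h.lt_iff hm he (hp.overlap_of_mem_ends hmv).symm, O.lt_iff_lt_of_passes_left hp hmv hv]

theorem lt_iff_of_passes_right (h : O.IsPlacement n x X) (he : S.level (S.src e) < n)
    (hm : S.level (S.src m) < n) (hp : S.Passes e v) (hmv : v ∈ S.ends m) (hv : v ∈ S.ends e') :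
    X e < X m ↔ O.lt e e' := by
  rw [h.lt_iff he hm (hp.overlap_of_mem_ends hmv), O.lt_iff_lt_of_passes_right hp hmv hv]

theorem lt_iff_port_lt (h : O.IsPlacement n x X) (he : S.level (S.src e) < n)
    (he' : S.level (S.src e') < n) (hb : S.endvertex e b = S.endvertex e' b) :
    X e < X e' ↔ O.port e b < O.port e' b := by
  rw [h.lt_iff he he' (overlap_of_endvertex_eq hb), O.port_lt_port hb]

theorem succ_of_forall_level_ne (h : O.IsPlacement n x X) (hn : ∀ v, S.level v ≠ n) :
    O.IsPlacement (n + 1) x X := by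
  have hlt : ∀ {v}, S.level v < n + 1 → S.level v < n := fun hv =>
    (Nat.lt_succ_iff.1 hv).lt_of_ne (hn _)
  exact ⟨fun e e' he he' => h.lt_of_lt e e' (hlt he) (hlt he'),
    fun e b he => h.port_pos e b (hlt he), fun e b he => h.port_neg e b (hlt he)⟩

end IsPlacement

open Classical in
/-- The abscissas of the vertices after placing `v` on the vertical line of abscissa `c` and
stretching the drawing by the factor `8`. -/
noncomputable def insertVertexX (v : V) (c : ℤ) (x : V → ℤ) (w : V) : ℤ :=
  if w = v then 8 * c else 8 * x w

variable (O) in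
open Classical in
/-- The abscissas of the edges after placing `v` on the vertical line of abscissa `c` and stretching
the drawing by the factor `8`, which leaves room for the edges leaving `v` next to this line. -/
noncomputable def insertEdgeX (v : V) (c : ℤ) (X : E → ℤ) (e : E) : ℤ :=
  if S.src e = v then 8 * c + O.port e false else 8 * X e

/-- The abscissa `c` is that of the central incoming edge of `v`; at the bottom vertex, `c` is
arbitrary. -/
def IsCentral (O : S.EdgeOrder) (X : E → ℤ) (v : V) (c : ℤ) : Prop :=
  v ≠ S.bot → ∃ m, S.tgt m = v ∧ O.port m true = 0 ∧ X m = c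

theorem exists_isCentral (X : E → ℤ) (v : V) : ∃ c, O.IsCentral X v c := by
  by_cases hv : v = S.bot
  · exact ⟨0, fun h => (h hv).elim⟩
  · obtain ⟨e, he⟩ := S.exists_tgt_eq v hv
    obtain ⟨m, hm, hm0⟩ := O.exists_port_eq_zero (e := e) (b := true) he
    exact ⟨X m, fun _ => ⟨m, hm, hm0, rfl⟩⟩

theorem IsCentral.exists_of_passes (hc : O.IsCentral X v c) (hp : S.Passes e v) :
    ∃ m, v ∈ S.ends m ∧ S.level (S.src m) < S.level v ∧ X m = c := by
  obtain ⟨m, rfl, -, hX⟩ := hc hp.ne_bot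
  exact ⟨m, tgt_mem_ends m, S.level_lt m, hX⟩

theorem neg_two_le_port (O : S.EdgeOrder) (e : E) (b : Bool) : -2 ≤ O.port e b := by
  have hle := O.neg_leftCount_le_port (e := e) (b := b) rfl
  unfold leftCount at hle
  split_ifs at hle <;> omega

theorem IsPlacement.insertEdgeX_lt (hhi : ∀ e b, O.port e b ≤ 3)
    (h : O.IsPlacement (S.level v) x X) (hc : O.IsCentral X v c)
    (he : S.level (S.src e) < S.level v + 1) (he' : S.level (S.src e') < S.level v + 1)
    (hov : S.Overlap e e') (hlt : O.lt e e') :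
    O.insertEdgeX v c X e < O.insertEdgeX v c X e' := by
  unfold insertEdgeX
  split_ifs with hv hv' hv'
  · have := (O.port_lt_port (b := false) (hv.trans hv'.symm)).2 hlt
    omega
  · have hl := level_lt_of_ne hv' he'
    have hp : S.Passes e' v := ⟨hl, hv ▸ hov.1⟩
    obtain ⟨m, hm, hml, rfl⟩ := hc.exists_of_passes hp
    have := (h.lt_iff_of_passes_left hl hml hp hm (mem_ends.2 (Or.inl hv.symm))).2 hlt
    have := hhi e false
    omega
  · have hl := level_lt_of_ne hv he
    have hp : S.Passes e v := ⟨hl, hv' ▸ hov.2⟩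
    obtain ⟨m, hm, hml, rfl⟩ := hc.exists_of_passes hp
    have := (h.lt_iff_of_passes_right hl hml hp hm (mem_ends.2 (Or.inl hv'.symm))).2 hlt
    have := O.neg_two_le_port e' false
    omega
  · have := h.lt_of_lt e e' (level_lt_of_ne hv he) (level_lt_of_ne hv' he') hov hlt
    omega

theorem IsPlacement.port_insert (h : O.IsPlacement (S.level v) x X) (hc : O.IsCentral X v c)
    (he : S.level (S.endvertex e b) < S.level v + 1) :
    (0 < O.port e b ↔ insertVertexX v c x (S.endvertex e b) < O.insertEdgeX v c X e) ∧
      (O.port e b < 0 ↔ O.insertEdgeX v c X e < insertVertexX v c x (S.endvertex e b)) := by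
  have hlt := S.level_lt e
  unfold insertEdgeX insertVertexX
  by_cases hb : S.endvertex e b = v
  · rw [if_pos hb]
    cases b with
    | false =>
      rw [if_pos (show S.src e = v from hb)]
      omega
    | true =>
      subst hb
      have hne : S.tgt e ≠ S.bot := tgt_ne_bot e
      obtain ⟨m, hm, hm0, rfl⟩ := hc hne
      have hml : S.level (S.src m) < S.level (S.endvertex e true) := hm ▸ S.level_lt m
      have hpos := h.lt_iff_port_lt (b := true) hml hlt hm
      have hneg := h.lt_iff_port_lt (b := true) hlt hml hm.symm
      have hsrc : S.src e ≠ S.endvertex e true := fun h => hlt.ne (congrArg S.level h)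
      rw [if_neg hsrc]
      omega
  · have hl := level_lt_of_ne hb he
    have hsrc : S.src e ≠ v := by
      rintro rfl
      cases b
      exacts [hb rfl, hlt.not_gt hl]
    rw [if_neg hb, if_neg hsrc]
    have := h.port_pos e b hl
    have := h.port_neg e b hl
    omega

theorem exists_isPlacement (hhi : ∀ e b, O.port e b ≤ 3) (n : ℕ) :
    ∃ x X, O.IsPlacement n x X := by
  induction n with
  | zero => exact ⟨0, 0, by simp, by simp, by simp⟩
  | succ n ih =>
    obtain ⟨x, X, h⟩ := ih
    by_cases hn : ∃ v, S.level v = n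
    · obtain ⟨v, rfl⟩ := hn
      obtain ⟨c, hc⟩ := O.exists_isCentral X v
      exact ⟨insertVertexX v c x, O.insertEdgeX v c X,
        fun _ _ => h.insertEdgeX_lt hhi hc, fun _ _ he => (h.port_insert hc he).1,
        fun _ _ he => (h.port_insert hc he).2⟩
    · exact ⟨x, X, h.succ_of_forall_level_ne fun v hv => hn ⟨v, hv⟩⟩

theorem IsPlacement.notMem_uIcc (h : O.IsPlacement n x X) (hn : ∀ v, S.level v < n)
    (hp : S.Passes e v) (hv : v ∈ S.ends e') : X e ∉ Set.uIcc (x v) (X e') := by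
  obtain ⟨i, hi⟩ := S.exists_tgt_eq v hp.ne_bot
  obtain ⟨m, rfl, hm0⟩ := O.exists_port_eq_zero (e := i) (b := true) hi
  have hm : S.endvertex m true ∈ S.ends m := endvertex_mem_ends m true
  have hxm : X m = x (S.endvertex m true) := by
    have := h.port_pos m true (hn _)
    have := h.port_neg m true (hn _)
    omega
  have hlt : X m < X e ↔ X e' < X e := by
    rw [h.lt_iff_of_passes_left (hn _) (hn _) hp hm hm,
      h.lt_iff_of_passes_left (hn _) (hn _) hp hv hm]
  have hgt : X e < X m ↔ X e < X e' := by
    rw [h.lt_iff_of_passes_right (hn _) (hn _) hp hm hm,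
      h.lt_iff_of_passes_right (hn _) (hn _) hp hv hm]
  have hne : X e < X m ∨ X m < X e := by
    rw [h.lt_iff (hn _) (hn _) (hp.overlap_of_mem_ends hm),
      h.lt_iff (hn _) (hn _) (hp.overlap_of_mem_ends hm).symm,
      O.lt_iff_not_lt (hp.overlap_of_mem_ends hm) fun h => hp.notMem_ends (h ▸ hm)]
    exact (em _).symm
  rw [Set.mem_uIcc]
  omega

theorem IsPlacement.ne (h : O.IsPlacement n x X) (he : S.level (S.src e) < n)
    (he' : S.level (S.src e') < n) (hov : S.Overlap e e') (hne : e ≠ e') : X e ≠ X e' := by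
  intro hX
  have hlt := h.lt_iff he he' hov
  have hgt := h.lt_iff he' he hov.symm
  have := O.lt_iff_not_lt hov hne
  rw [← hlt, ← hgt, hX] at this
  exact iff_not_self this

theorem port_le_three (O : S.EdgeOrder) (hdeg : ∀ v, {e | v ∈ S.ends e}.ncard ≤ 6) (e : E)
    (b : Bool) : O.port e b ≤ 3 := by
  have hlt := O.port_lt (e := e) (b := b) rfl
  have hcard := card_fan_add_card_fan_le hdeg (S.endvertex e b) b
  unfold leftCount at hlt
  split_ifs at hlt <;> omega

theorem port_ne_three (O : S.EdgeOrder) (hdeg : ∀ v, {e | v ∈ S.ends e}.ncard ≤ 6)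
    (h : S.endvertex e b = S.endvertex e' (!b)) : O.port e b ≠ 3 := by
  have hlt := O.port_lt (e := e) (b := b) rfl
  have hpos : 0 < (S.fan (S.endvertex e b) !b).card := Finset.card_pos.2 ⟨e', mem_fan.2 h.symm⟩
  have hcard := card_fan_add_card_fan_le hdeg (S.endvertex e b) b
  unfold leftCount at hlt
  split_ifs at hlt <;> omega

theorem abs_port_ne_two (O : S.EdgeOrder) (hdeg : ∀ v, {e | v ∈ S.ends e}.ncard ≤ 6)
    (h : S.endvertex e b = S.endvertex e' (!b)) (h2 : |O.port e b| = 2) :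
    |O.port e' (!b)| ≠ 2 := by
  intro h2'
  have hle := O.neg_leftCount_le_port (e := e) (b := b) rfl
  have hlt := O.port_lt (e := e) (b := b) rfl
  have hle' := O.neg_leftCount_le_port h.symm
  have hlt' := O.port_lt h.symm
  have hcard := card_fan_add_card_fan_le hdeg (S.endvertex e b) b
  have hp := (abs_eq zero_le_two).1 h2
  have hp' := (abs_eq zero_le_two).1 h2'
  unfold leftCount at hle hlt hle' hlt'
  split_ifs at * <;> omega

end EdgeOrder

theorem EdgeOrder.nonempty_coords {V E : Type*} [Finite E] {S : STGraph V E} (O : S.EdgeOrder)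
    (hdeg : ∀ v, {e | v ∈ S.ends e}.ncard ≤ 6) : Nonempty S.Coords := by
  have := Fintype.ofFinite E
  obtain ⟨x, X, h⟩ :=
    O.exists_isPlacement (O.port_le_three hdeg) (S.level S.top + 1)
  have hn : ∀ v, S.level v < S.level S.top + 1 := fun v => Nat.lt_succ_of_le (S.le_top v)
  exact ⟨{
    vertexX := x
    edgeX := X
    port := O.port
    neg_two_le_port := O.neg_two_le_port
    port_le_three := O.port_le_three hdeg
    port_ne_three := fun _ _ _ => O.port_ne_three hdeg
    abs_port_ne_two := fun _ _ _ => O.abs_port_ne_two hdeg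
    port_lt_port := fun e e' b hv => (h.lt_iff_port_lt (hn _) (hn _) hv).symm
    port_pos := fun e b => h.port_pos e b (hn _)
    port_neg := fun e b => h.port_neg e b (hn _)
    edgeX_ne := fun e e' => h.ne (hn _) (hn _)
    edgeX_notMem_uIcc := fun e e' v => h.notMem_uIcc hn }⟩

end STGraph

/-! ### Polylines with a vertical middle segment -/

theorem eq_of_mem_segment_of_not_collinear {F : Type*} [AddCommGroup F] [Module ℝ F] {a b c p : F}
    (h : ¬ Collinear ℝ ({a, b, c} : Set F)) (hab : p ∈ segment ℝ a b) (hbc : p ∈ segment ℝ b c) :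
    p = b := by
  by_contra hpb
  have ha : a ∈ line[ℝ, b, p] := (mem_segment_iff_wbtw.1 hab).collinear.mem_affineSpan_of_mem_of_ne
    (by simp) (by simp) (by simp) (Ne.symm hpb)
  have hc : c ∈ line[ℝ, b, p] := (mem_segment_iff_wbtw.1 hbc).collinear.mem_affineSpan_of_mem_of_ne
    (by simp) (by simp) (by simp) (Ne.symm hpb)
  exact h ((collinear_insert_insert_of_mem_affineSpan_pair ha hc).subset (by grind))

theorem not_collinear_of_fst_ne {a b c : ℝ × ℝ} (hab : a.1 ≠ b.1) (hbc : b.1 = c.1) (hne : b ≠ c) :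
    ¬ Collinear ℝ ({a, b, c} : Set (ℝ × ℝ)) := by
  intro h
  have ha : a ∈ line[ℝ, b, c] := h.mem_affineSpan_of_mem_of_ne (by simp) (by simp) (by simp) hne
  obtain ⟨r, rfl⟩ := mem_affineSpan_pair_iff_exists_lineMap_eq.1 ha
  rw [AffineMap.fst_lineMap, hbc, AffineMap.lineMap_same_apply] at hab
  exact hab rfl

namespace Polyline

theorem OctiSeg.symm {a b : ℝ × ℝ} (h : OctiSeg a b) : OctiSeg b a := by
  unfold OctiSeg at h ⊢
  grind

theorem add_smul_pt_injective {P : Polyline} {i : ℕ} (h : P.pt i ≠ P.pt (i + 1)) :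
    Function.Injective fun t : ℝ => P.pt i + t • (P.pt (i + 1) - P.pt i) :=
  (add_right_injective _).comp (smul_left_injective ℝ (sub_ne_zero.2 h.symm))

theorem Proper.natCast_add_eq {P : Polyline} (hP : P.Proper)
    (hdisj : ∀ i j, i + 1 < j → j < P.len →
      Disjoint (segment ℝ (P.pt i) (P.pt (i + 1))) (segment ℝ (P.pt j) (P.pt (j + 1))))
    {i j : ℕ} (hij : i ≤ j) (hj : j < P.len) {t r : ℝ} (ht : t ∈ Set.Icc (0 : ℝ) 1)
    (hr : r ∈ Set.Icc (0 : ℝ) 1) (h : P.param (i + t) = P.param (j + r)) :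
    (i : ℝ) + t = j + r := by
  have hi : P.pt i ≠ P.pt (i + 1) := hP.1 i (hij.trans_lt hj)
  have hpi := (P.mem_segment_iff i _).2 ⟨t, ht, rfl⟩
  have hpj := (P.mem_segment_iff j _).2 ⟨r, hr, h.symm⟩
  have hti := P.param_natCast_add i ht.1 ht.2
  have hrj := P.param_natCast_add j hr.1 hr.2
  obtain rfl | rfl | hlt : i = j ∨ j = i + 1 ∨ i + 1 < j := by omega
  · exact congrArg _ (add_smul_pt_injective hi (hti.symm.trans (h.trans hrj)))
  · have hp := eq_of_mem_segment_of_not_collinear (hP.2 i hj) hpi hpj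
    have ht1 : t = 1 := add_smul_pt_injective hi (by simpa using hti.symm.trans hp)
    have hr0 : r = 0 :=
      add_smul_pt_injective (hP.1 _ hj) (by simpa using hrj.symm.trans (h.symm.trans hp))
    rw [ht1, hr0, add_zero, Nat.cast_add_one]
  · exact (Set.disjoint_left.1 (hdisj i j hlt hj) hpi hpj).elim

theorem Proper.simple {P : Polyline} (hP : P.Proper)
    (hdisj : ∀ i j, i + 1 < j → j < P.len →
      Disjoint (segment ℝ (P.pt i) (P.pt (i + 1))) (segment ℝ (P.pt j) (P.pt (j + 1)))) :
    P.Simple := by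
  intro s hs s' hs' h
  obtain ⟨i, hi, t, ht, rfl⟩ := P.exists_eq_natCast_add hs
  obtain ⟨j, hj, r, hr, rfl⟩ := P.exists_eq_natCast_add hs'
  rcases le_total i j with hij | hji
  · exact hP.natCast_add_eq hdisj hij hj ht hr h
  · exact (hP.natCast_add_eq hdisj hji hi hr ht h.symm).symm

theorem exists_octilinear_simple (q : ℕ → ℝ × ℝ) {k l : ℕ} (hkl : k < l)
    (hseg : ∀ i, k ≤ i → i < l → q i ≠ q (i + 1) ∧ OctiSeg (q i) (q (i + 1)))
    (hcol : ∀ i, k ≤ i → i + 1 < l →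
      ¬ Collinear ℝ ({q i, q (i + 1), q (i + 2)} : Set (ℝ × ℝ)))
    (hdisj : ∀ i j, k ≤ i → i + 1 < j → j < l →
      Disjoint (segment ℝ (q i) (q (i + 1))) (segment ℝ (q j) (q (j + 1)))) :
    ∃ P : Polyline, P.pt 0 = q k ∧ P.pt P.len = q l ∧ P.len = l - k ∧ P.Octilinear ∧ P.Simple ∧
      ∀ p ∈ P.image, ∃ i, k ≤ i ∧ i < l ∧ p ∈ segment ℝ (q i) (q (i + 1)) := by
  let P : Polyline := ⟨l - k, by omega, fun i => q (k + i)⟩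
  have hlt : ∀ {i}, i < P.len → k + i < l := fun h => by
    change _ < l - k at h
    omega
  have hproper : P.Proper :=
    ⟨fun i hi => (hseg (k + i) (by omega) (hlt hi)).1,
      fun i hi => hcol (k + i) (by omega) (hlt hi)⟩
  refine ⟨P, rfl, congrArg q (Nat.add_sub_of_le hkl.le), rfl,
    ⟨hproper, fun i hi => (hseg (k + i) (by omega) (hlt hi)).2⟩,
    hproper.simple fun i j hij hj => hdisj (k + i) (k + j) (by omega) (by omega) (hlt hj),
    fun p hp => ?_⟩
  obtain ⟨i, hi, hp⟩ := (P.mem_image_iff p).1 hp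
  exact ⟨k + i, by omega, hlt hi, hp⟩

theorem exists_of_vertical_middle {a b c d : ℝ × ℝ} (hbc : b.1 = c.1) (hne : b ≠ c)
    (hab : a = b ∨ a.1 ≠ b.1 ∧ OctiSeg a b) (hcd : c = d ∨ c.1 ≠ d.1 ∧ OctiSeg c d)
    (hdisj : Disjoint (segment ℝ a b) (segment ℝ c d)) :
    ∃ P : Polyline, P.pt 0 = a ∧ P.pt P.len = d ∧ P.bends ≤ 2 ∧ P.Octilinear ∧ P.Simple ∧
      P.image ⊆ segment ℝ a b ∪ segment ℝ b c ∪ segment ℝ c d := by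
  let q : ℕ → ℝ × ℝ := fun i => if i = 0 then a else if i = 1 then b else if i = 2 then c else d
  -- the polyline runs from `q k` to `q l`, which omits the degenerate segments
  obtain ⟨k, hk, hka, hkab⟩ : ∃ k ≤ 1, q k = a ∧ (k = 0 → a.1 ≠ b.1 ∧ OctiSeg a b) := by
    rcases hab with rfl | hab
    exacts [⟨1, le_rfl, rfl, by simp⟩, ⟨0, zero_le_one, rfl, fun _ => hab⟩]
  obtain ⟨l, hl2, hl3, hld, hlcd⟩ :
      ∃ l ≥ 2, l ≤ 3 ∧ q l = d ∧ (l = 3 → c.1 ≠ d.1 ∧ OctiSeg c d) := by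
    rcases hcd with rfl | hcd
    exacts [⟨2, le_rfl, by simp, rfl, by simp⟩, ⟨3, by simp, le_rfl, rfl, fun _ => hcd⟩]
  obtain ⟨P, h0, hlen, hPlen, hocti, hsimple, himage⟩ :=
    exists_octilinear_simple q (k := k) (l := l) (by omega)
      (fun i hki hil => by
        obtain rfl | rfl | rfl : i = 0 ∨ i = 1 ∨ i = 2 := by omega
        · exact (hkab (by omega)).imp_left fun h h' => h (congrArg Prod.fst h')
        · exact ⟨hne, Or.inr (Or.inl (sub_eq_zero.2 hbc.symm))⟩
        · exact (hlcd (by omega)).imp_left fun h h' => h (congrArg Prod.fst h'))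
      (fun i hki hil => by
        obtain rfl | rfl : i = 0 ∨ i = 1 := by omega
        · exact not_collinear_of_fst_ne (hkab (by omega)).1 hbc hne
        · have h := not_collinear_of_fst_ne (hlcd (by omega)).1.symm hbc.symm hne.symm
          exact fun h' => h (h'.subset (by grind)))
      (fun i j hki hij hjl => by
        obtain ⟨rfl, rfl⟩ : i = 0 ∧ j = 2 := by omega
        exact hdisj)
  refine ⟨P, h0.trans hka, hlen.trans hld, by rw [bends]; omega, hocti, hsimple, fun p hp => ?_⟩
  obtain ⟨i, -, hil, hp⟩ := himage p hp
  obtain rfl | rfl | rfl : i = 0 ∨ i = 1 ∨ i = 2 := by omega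
  exacts [Or.inl (Or.inl hp), Or.inl (Or.inr hp), Or.inr hp]

end Polyline

/-! ### Stubs and vertical parts -/

namespace STGraph

/-- The slope of the first segment of an edge leaving its endvertex through port `d`, measured away
from the endvertex on both axes: `1` and `-1` for the forward and backward diagonals, and `0` for
the horizontal ports and, by convention, for the vertical one. -/
noncomputable def portSlope (d : ℤ) : ℝ := if d = 1 ∨ d = -1 then 1 else if d = 3 then -1 else 0

/-- The vertical direction in which an edge leaves its endvertex on side `b`. -/
noncomputable def outward : Bool → ℝ
  | false => 1
  | true => -1

theorem portSlope_trichotomy (d : ℤ) : portSlope d = 0 ∨ portSlope d = 1 ∨ portSlope d = -1 := by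
  unfold portSlope
  split_ifs <;> simp

theorem abs_portSlope_mul_abs_le (d : ℤ) (z : ℝ) : |portSlope d * (|z|)| ≤ |z| := by
  rcases portSlope_trichotomy d with h | h | h <;> simp [h]

theorem portSlope_nonneg {d : ℤ} (h : d ≠ 3) : 0 ≤ portSlope d := by
  unfold portSlope
  split_ifs <;> simp

theorem abs_eq_two_of_portSlope_nonpos {d : ℤ} (h0 : d ≠ 0) (hlo : -2 ≤ d) (hhi : d < 3)
    (h : portSlope d ≤ 0) : |d| = 2 := by
  have hd : d = 1 ∨ d = -1 ∨ d = 2 ∨ d = -2 := by omega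
  rcases hd with rfl | rfl | rfl | rfl <;> simp [portSlope] at h ⊢
  all_goals norm_num at h

theorem portSlope_lt_portSlope {d d' : ℤ} (hlo : -2 ≤ d) (hhi : d ≤ 3)
    (h : 0 < d' ∧ d' < d ∨ d < d' ∧ d' < 0) : portSlope d < portSlope d' := by
  have hd : d = 2 ∧ d' = 1 ∨ d = 3 ∧ d' = 1 ∨ d = 3 ∧ d' = 2 ∨ d = -2 ∧ d' = -1 := by omega
  rcases hd with ⟨rfl, rfl⟩ | ⟨rfl, rfl⟩ | ⟨rfl, rfl⟩ | ⟨rfl, rfl⟩ <;> norm_num [portSlope]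

theorem outward_mul_self (b : Bool) : outward b * outward b = 1 := by
  cases b <;> norm_num [outward]

theorem abs_outward_mul (b : Bool) (z : ℝ) : |outward b * z| = |z| := by
  cases b <;> simp [outward]

theorem outward_not_mul (b : Bool) (z : ℝ) : outward (!b) * z = -(outward b * z) := by
  cases b <;> simp [outward]

namespace Coords

variable {V E : Type*} {S : STGraph V E} {C : S.Coords} {Y : V → ℝ} {B : ℝ} {e e' : E} {b : Bool}
  {v w : V} {p : ℝ × ℝ}

variable (C Y)

/-- The point representing a vertex when the ordinates of the vertices are given by `Y`. -/
def point (v : V) : ℝ × ℝ := (C.vertexX v, Y v)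

/-- The points horizontally between the endvertex of `e` on side `b` and the vertical part of `e`,
on the line carrying the first segment of `e` or on its far side as seen from the endvertex. -/
def wedge (e : E) (b : Bool) : Set (ℝ × ℝ) :=
  {p | p.1 ∈ Set.uIcc (C.vertexX (S.endvertex e b) : ℝ) (C.edgeX e) ∧
    portSlope (C.port e b) * |p.1 - C.vertexX (S.endvertex e b)| ≤
      outward b * (p.2 - Y (S.endvertex e b))}

/-- The part of `e` between its endvertex on side `b` and its vertical part; a single point if the
port is vertical. -/
def stub (e : E) (b : Bool) : Set (ℝ × ℝ) :=
  {p | p ∈ C.wedge Y e b ∧ outward b * (p.2 - Y (S.endvertex e b)) =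
    portSlope (C.port e b) * |p.1 - C.vertexX (S.endvertex e b)|}

/-- The vertical part of `e`. -/
def vert (e : E) : Set (ℝ × ℝ) := {p | p.1 = C.edgeX e ∧ ∀ b, p ∈ C.wedge Y e b}

/-- The curve representing `e`. -/
def curve (e : E) : Set (ℝ × ℝ) := C.vert Y e ∪ ⋃ b, C.stub Y e b

/-- The ordinates `Y` spread the vertices so far apart that the stubs at distinct vertices lie in
disjoint horizontal bands. -/
structure IsSpread (B : ℝ) : Prop where
  abs_sub_le : ∀ e v, |(C.edgeX e : ℝ) - C.vertexX v| ≤ B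
  add_lt : ∀ v w, S.level v < S.level w → Y v + 2 * B < Y w

variable {C Y}

theorem port_eq_zero_iff : C.port e b = 0 ↔ C.edgeX e = C.vertexX (S.endvertex e b) := by
  have := C.port_pos e b
  have := C.port_neg e b
  omega

theorem portSlope_add_pos (hv : S.endvertex e b = S.endvertex e' (!b)) (h : C.port e b ≠ 0)
    (h' : C.port e' (!b) ≠ 0) : 0 < portSlope (C.port e b) + portSlope (C.port e' (!b)) := by
  have h3 := C.port_ne_three e e' b hv
  have h3' := C.port_ne_three e' e (!b) (by rw [Bool.not_not, hv])
  have hk := portSlope_nonneg h3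
  have hk' := portSlope_nonneg h3'
  by_contra! hle
  exact C.abs_port_ne_two e e' b hv
    (abs_eq_two_of_portSlope_nonpos h (C.neg_two_le_port e b)
      ((C.port_le_three e b).lt_of_ne h3) (by linarith))
    (abs_eq_two_of_portSlope_nonpos h' (C.neg_two_le_port e' _)
      ((C.port_le_three e' _).lt_of_ne h3') (by linarith))

theorem port_ne_zero_of_mem_wedge (hp : p ∈ C.wedge Y e b)
    (hne : p.1 ≠ C.vertexX (S.endvertex e b)) : C.port e b ≠ 0 := by
  rw [Ne, port_eq_zero_iff]
  intro h
  have hmem := hp.1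
  rw [h, Set.uIcc_self] at hmem
  exact hne hmem

theorem eq_point_of_mem_wedge_of_mem_wedge_not (hv : S.endvertex e b = S.endvertex e' (!b))
    (hp : p ∈ C.wedge Y e b) (hp' : p ∈ C.wedge Y e' (!b)) :
    p = C.point Y (S.endvertex e b) := by
  have hle := hp.2
  have hle' := hp'.2
  rw [← hv, outward_not_mul] at hle'
  have hx : p.1 = C.vertexX (S.endvertex e b) := by
    by_contra hne
    have hpos := portSlope_add_pos hv (port_ne_zero_of_mem_wedge hp hne)
      (port_ne_zero_of_mem_wedge hp' (hv ▸ hne))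
    have hd : 0 < |p.1 - C.vertexX (S.endvertex e b)| := abs_pos.2 (sub_ne_zero.2 hne)
    linarith [mul_pos hpos hd]
  rw [hx, sub_self, abs_zero, mul_zero] at hle hle'
  refine Prod.ext hx ?_
  have h0 : |outward b * (p.2 - Y (S.endvertex e b))| = 0 :=
    abs_eq_zero.2 (le_antisymm (by linarith) hle)
  rw [abs_outward_mul, abs_eq_zero, sub_eq_zero] at h0
  exact h0

theorem eq_point_of_mem_stub (hp : p ∈ C.stub Y e b) (hx : p.1 = C.vertexX (S.endvertex e b)) :
    p = C.point Y (S.endvertex e b) := by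
  have h := hp.2
  rw [hx, sub_self, abs_zero, mul_zero, ← abs_eq_zero, abs_outward_mul, abs_eq_zero,
    sub_eq_zero] at h
  exact Prod.ext hx h

/- Among the edges leaving a vertex to one side, those with a vertical part closer to the vertex
leave more steeply. -/
theorem eq_point_of_mem_stub_of_mem_wedge (hv : S.endvertex e b = S.endvertex e' b) (hne : e ≠ e')
    (hp : p ∈ C.stub Y e b) (hp' : p ∈ C.wedge Y e' b)
    (hX : C.edgeX e' ∈ Set.uIcc (C.vertexX (S.endvertex e b)) (C.edgeX e)) :
    p = C.point Y (S.endvertex e b) := by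
  refine eq_point_of_mem_stub hp ?_
  by_contra hx
  have hle := hp'.2
  rw [← hv, hp.2] at hle
  have hslope : portSlope (C.port e' b) ≤ portSlope (C.port e b) :=
    le_of_mul_le_mul_right hle (abs_pos.2 (sub_ne_zero.2 hx))
  have h0 := port_ne_zero_of_mem_wedge hp' (hv ▸ hx)
  have hedge := C.edgeX_ne e e' (overlap_of_endvertex_eq hv) hne
  have hlt := C.port_lt_port e e' b hv
  have hgt := C.port_lt_port e' e b hv.symm
  have hpos := C.port_pos e' b
  have hneg := C.port_neg e' b
  rw [← hv] at hpos hneg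
  rw [Set.mem_uIcc] at hX
  exact hslope.not_gt
    (portSlope_lt_portSlope (C.neg_two_le_port e b) (C.port_le_three e b) (by omega))

namespace IsSpread

theorem nonneg (h : C.IsSpread Y B) : 0 ≤ B :=
  (abs_nonneg _).trans (h.abs_sub_le S.outer S.bot)

theorem abs_portSlope_le (h : C.IsSpread Y B) (e : E) (b : Bool) :
    |portSlope (C.port e b) * (|(C.edgeX e : ℝ) - C.vertexX (S.endvertex e b)|)| ≤ B :=
  (abs_portSlope_mul_abs_le _ _).trans (h.abs_sub_le _ _)

theorem eq_of_abs_sub_le (h : C.IsSpread Y B) {y : ℝ} (hv : |y - Y v| ≤ B) (hw : |y - Y w| ≤ B) :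
    v = w := by
  rw [abs_le] at hv hw
  rcases lt_trichotomy (S.level v) (S.level w) with hlt | heq | hlt
  · linarith [h.add_lt _ _ hlt]
  · exact S.level_injective heq
  · linarith [h.add_lt _ _ hlt]

theorem abs_sub_le_of_mem_stub (h : C.IsSpread Y B) (hp : p ∈ C.stub Y e b) :
    |p.2 - Y (S.endvertex e b)| ≤ B := by
  rw [← abs_outward_mul b, hp.2]
  exact (abs_portSlope_mul_abs_le _ _).trans
    ((Set.abs_sub_left_of_mem_uIcc hp.1.1).trans (h.abs_sub_le _ _))

theorem sub_le_of_mem_vert (h : C.IsSpread Y B) (hp : p ∈ C.vert Y e) :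
    Y (S.src e) - B ≤ p.2 ∧ p.2 ≤ Y (S.tgt e) + B := by
  obtain ⟨hx, hwedge⟩ := hp
  have hlo := (hwedge false).2
  have hhi := (hwedge true).2
  have hlo' := (abs_le.1 (h.abs_portSlope_le e false)).1
  have hhi' := (abs_le.1 (h.abs_portSlope_le e true)).1
  rw [hx] at hlo hhi
  simp only [outward, endvertex] at *
  constructor <;> linarith

theorem mem_ends_or_passes (h : C.IsSpread Y B) (hp : p ∈ C.vert Y e) (hw : |p.2 - Y w| ≤ B) :
    w ∈ S.ends e ∨ S.Passes e w := by
  obtain ⟨hlo, hhi⟩ := h.sub_le_of_mem_vert hp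
  rw [abs_le] at hw
  rcases lt_trichotomy (S.level (S.src e)) (S.level w) with hs | hs | hs
  · rcases lt_trichotomy (S.level w) (S.level (S.tgt e)) with ht | ht | ht
    · exact Or.inr ⟨hs, ht⟩
    · exact Or.inl (mem_ends.2 (Or.inr (S.level_injective ht)))
    · linarith [h.add_lt _ _ ht]
  · exact Or.inl (mem_ends.2 (Or.inl (S.level_injective hs.symm)))
  · linarith [h.add_lt _ _ hs]

theorem stub_inter_stub (h : C.IsSpread Y B) {b' : Bool} (hne : e ≠ e') (hp : p ∈ C.stub Y e b)
    (hp' : p ∈ C.stub Y e' b') :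
    S.endvertex e b = S.endvertex e' b' ∧ p = C.point Y (S.endvertex e b) := by
  have hv := h.eq_of_abs_sub_le (h.abs_sub_le_of_mem_stub hp) (h.abs_sub_le_of_mem_stub hp')
  refine ⟨hv, ?_⟩
  rcases Bool.eq_or_eq_not b' b with rfl | rfl
  · by_contra hpt
    have hx : p.1 ≠ C.vertexX (S.endvertex e b') := fun hx => hpt (eq_point_of_mem_stub hp hx)
    have hnear : C.edgeX e' ∈ Set.uIcc (C.vertexX (S.endvertex e b')) (C.edgeX e) ∨
        C.edgeX e ∈ Set.uIcc (C.vertexX (S.endvertex e' b')) (C.edgeX e') := by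
      have hmem := hp.1.1
      have hmem' := hp'.1.1
      rw [← hv] at hmem' ⊢
      simp only [Set.mem_uIcc] at hmem hmem' ⊢
      have hright : (C.vertexX (S.endvertex e b') : ℝ) < p.1 →
          C.vertexX (S.endvertex e b') < C.edgeX e ∧ C.vertexX (S.endvertex e b') < C.edgeX e' := by
        intro hlt
        constructor <;> rify <;> grind
      have hleft : p.1 < (C.vertexX (S.endvertex e b') : ℝ) →
          C.edgeX e < C.vertexX (S.endvertex e b') ∧ C.edgeX e' < C.vertexX (S.endvertex e b') := by
        intro hlt
        constructor <;> rify <;> grind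
      rcases hx.lt_or_gt with hlt | hlt
      · have := hleft hlt
        omega
      · have := hright hlt
        omega
    rcases hnear with hX | hX
    · exact hpt (eq_point_of_mem_stub_of_mem_wedge hv hne hp hp'.1 hX)
    · exact hpt (hv ▸ eq_point_of_mem_stub_of_mem_wedge hv.symm hne.symm hp' hp.1 hX)
  · exact eq_point_of_mem_wedge_of_mem_wedge_not hv hp.1 hp'.1

theorem stub_inter_vert (h : C.IsSpread Y B) (hne : e ≠ e') (hp : p ∈ C.stub Y e b)
    (hp' : p ∈ C.vert Y e') :
    S.endvertex e b ∈ S.ends e' ∧ p = C.point Y (S.endvertex e b) := by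
  have hX : C.edgeX e' ∈ Set.uIcc (C.vertexX (S.endvertex e b)) (C.edgeX e) := by
    have hmem := hp.1.1
    rw [hp'.1, Set.mem_uIcc] at hmem
    exact Set.mem_uIcc.2 (mod_cast hmem)
  rcases h.mem_ends_or_passes hp' (h.abs_sub_le_of_mem_stub hp) with hv | hpass
  · refine ⟨hv, ?_⟩
    obtain ⟨b', hb'⟩ := mem_ends_iff_exists_endvertex.1 hv
    rcases Bool.eq_or_eq_not b' b with rfl | rfl
    · exact eq_point_of_mem_stub_of_mem_wedge hb'.symm hne hp (hp'.2 _) hX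
    · exact eq_point_of_mem_wedge_of_mem_wedge_not hb'.symm hp.1 (hp'.2 _)
  · exact (C.edgeX_notMem_uIcc e' e _ hpass (endvertex_mem_ends e b) hX).elim

theorem vert_inter_vert (h : C.IsSpread Y B) (hle : S.level (S.tgt e) ≤ S.level (S.src e'))
    (hp : p ∈ C.vert Y e) (hp' : p ∈ C.vert Y e') :
    S.tgt e = S.src e' ∧ p = C.point Y (S.tgt e) := by
  rcases hle.lt_or_eq with hlt | heq
  · linarith [h.add_lt _ _ hlt, (h.sub_le_of_mem_vert hp).2, (h.sub_le_of_mem_vert hp').1]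
  · have hv := S.level_injective heq
    exact ⟨hv, eq_point_of_mem_wedge_of_mem_wedge_not (b := true) hv (hp.2 _) (hp'.2 _)⟩

theorem curve_inter_curve (h : C.IsSpread Y B) (hne : e ≠ e') :
    C.curve Y e ∩ C.curve Y e' ⊆ C.point Y '' {v | v ∈ S.ends e ∧ v ∈ S.ends e'} := by
  rintro p ⟨hp | hp, hp' | hp'⟩
  · by_cases h₁ : S.level (S.tgt e) ≤ S.level (S.src e')
    · obtain ⟨hv, rfl⟩ := h.vert_inter_vert h₁ hp hp'
      exact ⟨_, ⟨tgt_mem_ends e, hv ▸ src_mem_ends e'⟩, rfl⟩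
    by_cases h₂ : S.level (S.tgt e') ≤ S.level (S.src e)
    · obtain ⟨hv, rfl⟩ := h.vert_inter_vert h₂ hp' hp
      exact ⟨_, ⟨hv ▸ src_mem_ends e, tgt_mem_ends e'⟩, rfl⟩
    · have hX : (C.edgeX e : ℝ) = C.edgeX e' := hp.1.symm.trans hp'.1
      exact (C.edgeX_ne e e' ⟨not_le.1 h₂, not_le.1 h₁⟩ hne (mod_cast hX)).elim
  · obtain ⟨b, hp'⟩ := Set.mem_iUnion.1 hp'
    obtain ⟨hv, rfl⟩ := h.stub_inter_vert hne.symm hp' hp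
    exact ⟨_, ⟨hv, endvertex_mem_ends e' b⟩, rfl⟩
  · obtain ⟨b, hp⟩ := Set.mem_iUnion.1 hp
    obtain ⟨hv, rfl⟩ := h.stub_inter_vert hne hp hp'
    exact ⟨_, ⟨endvertex_mem_ends e b, hv⟩, rfl⟩
  · obtain ⟨b, hp⟩ := Set.mem_iUnion.1 hp
    obtain ⟨b', hp'⟩ := Set.mem_iUnion.1 hp'
    obtain ⟨hv, rfl⟩ := h.stub_inter_stub hne hp hp'
    exact ⟨_, ⟨endvertex_mem_ends e b, hv ▸ endvertex_mem_ends e' b'⟩, rfl⟩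

theorem mem_ends_of_point_mem_curve (h : C.IsSpread Y B) (hw : C.point Y w ∈ C.curve Y e) :
    w ∈ S.ends e := by
  have hband : |(C.point Y w).2 - Y w| ≤ B := by
    rw [point, sub_self, abs_zero]
    exact h.nonneg
  rcases hw with hw | hw
  · refine (h.mem_ends_or_passes hw hband).resolve_right fun hpass => ?_
    obtain ⟨e', rfl⟩ := S.exists_src_eq w hpass.ne_top
    have hX : (C.vertexX (S.src e') : ℝ) = C.edgeX e := hw.1
    exact C.edgeX_notMem_uIcc e e' _ hpass (src_mem_ends e')
      (Int.cast_injective hX ▸ Set.left_mem_uIcc)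
  · obtain ⟨b, hw⟩ := Set.mem_iUnion.1 hw
    rw [← h.eq_of_abs_sub_le (h.abs_sub_le_of_mem_stub hw) hband]
    exact endvertex_mem_ends e b

end IsSpread

variable (C Y) in
/-- The end on the vertical part of the stub of `e` on side `b`; a bend unless the port is
vertical. -/
noncomputable def bend (e : E) (b : Bool) : ℝ × ℝ :=
  (C.edgeX e, Y (S.endvertex e b) +
    outward b * (portSlope (C.port e b) * |(C.edgeX e : ℝ) - C.vertexX (S.endvertex e b)|))

theorem segment_subset_stub :
    segment ℝ (C.point Y (S.endvertex e b)) (C.bend Y e b) ⊆ C.stub Y e b := by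
  intro p hp
  have hx : p.1 ∈ Set.uIcc (C.vertexX (S.endvertex e b) : ℝ) (C.edgeX e) := by
    rw [← segment_eq_uIcc]
    exact (Prod.segment_subset _ _ hp).1
  rw [segment_eq_image'] at hp
  obtain ⟨t, ⟨h0, -⟩, rfl⟩ := hp
  have hheight : outward b * ((C.point Y (S.endvertex e b) +
      t • (C.bend Y e b - C.point Y (S.endvertex e b))).2 - Y (S.endvertex e b)) =
      portSlope (C.port e b) * |(C.point Y (S.endvertex e b) +
        t • (C.bend Y e b - C.point Y (S.endvertex e b))).1 - C.vertexX (S.endvertex e b)| := by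
    simp only [point, bend, Prod.fst_add, Prod.snd_add, Prod.smul_fst, Prod.smul_snd,
      Prod.fst_sub, Prod.snd_sub, smul_eq_mul, add_sub_cancel_left, abs_mul, abs_of_nonneg h0]
    linear_combination (t * (portSlope (C.port e b) *
      |(C.edgeX e : ℝ) - C.vertexX (S.endvertex e b)|)) * outward_mul_self b
  exact ⟨⟨hx, hheight.ge⟩, hheight⟩

theorem point_eq_bend_or_octiSeg (C : S.Coords) (Y : V → ℝ) (e : E) (b : Bool) :
    C.point Y (S.endvertex e b) = C.bend Y e b ∨
      (C.point Y (S.endvertex e b)).1 ≠ (C.bend Y e b).1 ∧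
        Polyline.OctiSeg (C.point Y (S.endvertex e b)) (C.bend Y e b) := by
  by_cases h : C.edgeX e = C.vertexX (S.endvertex e b)
  · left
    simp [point, bend, h]
  · refine Or.inr ⟨fun h' => h (Int.cast_injective (α := ℝ) h'.symm), ?_⟩
    simp only [Polyline.OctiSeg, point, bend, add_sub_cancel_left]
    rcases portSlope_trichotomy (C.port e b) with hk | hk | hk <;> cases b <;>
      rcases abs_choice ((C.edgeX e : ℝ) - C.vertexX (S.endvertex e _)) with ha | ha <;>
      rw [hk, ha] <;> simp [outward]

namespace IsSpread

theorem bend_lt_bend (h : C.IsSpread Y B) (e : E) : (C.bend Y e false).2 < (C.bend Y e true).2 := by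
  have hlo := (abs_le.1 (h.abs_portSlope_le e false)).2
  have hhi := (abs_le.1 (h.abs_portSlope_le e true)).2
  have hlt := h.add_lt _ _ (S.level_lt e)
  simp only [bend, outward, endvertex] at *
  linarith

theorem segment_subset_vert (h : C.IsSpread Y B) (e : E) :
    segment ℝ (C.bend Y e false) (C.bend Y e true) ⊆ C.vert Y e := by
  intro p hp
  obtain ⟨hx, hy⟩ := Prod.segment_subset _ _ hp
  rw [segment_eq_Icc (h.bend_lt_bend e).le] at hy
  have hX : p.1 = C.edgeX e := by simpa [bend] using hx
  refine ⟨hX, fun b => ⟨hX ▸ Set.right_mem_uIcc, ?_⟩⟩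
  rw [hX]
  cases b
  · have := hy.1
    simp only [bend, outward] at this ⊢
    linarith
  · have := hy.2
    simp only [bend, outward] at this ⊢
    linarith

theorem disjoint_stub (h : C.IsSpread Y B) (e : E) :
    Disjoint (C.stub Y e false) (C.stub Y e true) :=
  Set.disjoint_left.2 fun _ hp hp' => (S.level_lt e).ne <| congrArg S.level <|
    h.eq_of_abs_sub_le (h.abs_sub_le_of_mem_stub hp) (h.abs_sub_le_of_mem_stub hp')

theorem exists_polyline (h : C.IsSpread Y B) (e : E) :
    ∃ P : Polyline, P.pt 0 = C.point Y (S.src e) ∧ P.pt P.len = C.point Y (S.tgt e) ∧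
      P.bends ≤ 2 ∧ P.Octilinear ∧ P.Simple ∧ P.image ⊆ C.curve Y e := by
  have hfalse : segment ℝ (C.point Y (S.endvertex e false)) (C.bend Y e false) ⊆
      C.stub Y e false := segment_subset_stub
  have htrue : segment ℝ (C.bend Y e true) (C.point Y (S.endvertex e true)) ⊆
      C.stub Y e true := by
    rw [segment_symm]
    exact segment_subset_stub
  have hfst : (C.bend Y e false).1 = (C.bend Y e true).1 := rfl
  obtain ⟨P, h0, hlen, hbends, hocti, hsimple, himage⟩ :=
    Polyline.exists_of_vertical_middle hfst
      (fun heq => (h.bend_lt_bend e).ne (congrArg Prod.snd heq))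
      (point_eq_bend_or_octiSeg C Y e false)
      ((point_eq_bend_or_octiSeg C Y e true).imp Eq.symm fun h => ⟨h.1.symm, h.2.symm⟩)
      ((h.disjoint_stub e).mono hfalse htrue)
  refine ⟨P, h0, hlen, hbends, hocti, hsimple, fun p hp => ?_⟩
  rcases himage hp with (hp | hp) | hp
  · exact Or.inr (Set.mem_iUnion.2 ⟨false, hfalse hp⟩)
  · exact Or.inl (h.segment_subset_vert e hp)
  · exact Or.inr (Set.mem_iUnion.2 ⟨true, htrue hp⟩)

end IsSpread

theorem exists_isSpread [Finite V] [Finite E] (C : S.Coords) :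
    ∃ (Y : V → ℤ) (B : ℝ), C.IsSpread (fun v => Y v) B := by
  obtain ⟨B, hB⟩ := (Set.finite_range fun q : E × V => |C.edgeX q.1 - C.vertexX q.2|).bddAbove
  have hBle : ∀ e v, |C.edgeX e - C.vertexX v| ≤ B := fun e v => hB ⟨(e, v), rfl⟩
  have hB0 : 0 ≤ B := (abs_nonneg _).trans (hBle S.outer S.bot)
  refine ⟨fun v => (2 * B + 1) * S.level v, B, fun e v => mod_cast hBle e v, fun v w hlt => ?_⟩
  have hlt' : (S.level v : ℤ) + 1 ≤ S.level w := mod_cast hlt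
  have hY : (2 * B + 1) * (S.level v : ℤ) + 2 * B < (2 * B + 1) * S.level w := by
    nlinarith [hlt']
  exact mod_cast hY

end Coords

end STGraph

/-! ### Octilinear drawings of biconnected graphs -/

section OctilinearDrawing

variable {V : Type*} {G : SimpleGraph V}

theorem exists_octiDrawing_of_polylines {pos : V → ℤ × ℤ} {k : ℕ} (P : G.edgeSet → Polyline)
    (hpos : Function.Injective pos)
    (hends : ∀ e : G.edgeSet, ∃ v w, e.1 = s(v, w) ∧
      (P e).pt 0 = toR (pos v) ∧ (P e).pt (P e).len = toR (pos w))
    (hbends : ∀ e, (P e).bends ≤ k) (hocti : ∀ e, (P e).Octilinear) (hsimple : ∀ e, (P e).Simple)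
    (hvertex : ∀ (e : G.edgeSet) w, toR (pos w) ∈ (P e).image → w ∈ e.1)
    (hinter : ∀ e e' : G.edgeSet, e ≠ e' →
      (P e).image ∩ (P e').image ⊆ (fun w => toR (pos w)) '' {w | w ∈ e.1 ∧ w ∈ e'.1}) :
    ∃ D : OctiDrawing G, D.IsPlanar ∧ ∀ e ∈ G.edgeSet, (D.poly e).bends ≤ k := by
  obtain ⟨Q, hQ⟩ : ∃ Q : Sym2 V → Polyline, ∀ e (he : e ∈ G.edgeSet), Q e = P ⟨e, he⟩ :=
    ⟨Function.extend Subtype.val P fun _ => ⟨1, le_rfl, fun _ => 0⟩,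
      fun e he => Subtype.val_injective.extend_apply P _ ⟨e, he⟩⟩
  have hpt : ∀ u v, G.Adj u v → ({(Q s(u, v)).pt 0, (Q s(u, v)).pt (Q s(u, v)).len} : Set _) =
      {toR (pos u), toR (pos v)} := by
    intro u v huv
    obtain ⟨v', w', he, h0, hlen⟩ := hends ⟨s(u, v), huv⟩
    rw [hQ _ huv, h0, hlen]
    rcases Sym2.eq_iff.1 he with ⟨rfl, rfl⟩ | ⟨rfl, rfl⟩
    · rfl
    · exact Set.pair_comm _ _
  refine ⟨⟨pos, hpos, Q, hpt, fun e he => hQ e he ▸ hocti _⟩,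
    ⟨fun e he => ?_, fun u v huv => ?_, fun e he e' he' hne => ?_⟩, fun e he => ?_⟩ <;> dsimp only
  · exact hQ e he ▸ hsimple _
  · refine Set.Subset.antisymm ?_ (Set.subset_inter ?_ ?_)
    · rintro _ ⟨hw, w, rfl⟩
      rcases Sym2.mem_iff.1 (hvertex ⟨s(u, v), huv⟩ w (hQ s(u, v) huv ▸ hw)) with rfl | rfl
      exacts [Set.mem_insert _ _, Set.mem_insert_of_mem _ rfl]
    · rw [← hpt u v huv]
      exact Set.pair_subset (Polyline.pt_mem_image _ (Nat.zero_le _))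
        (Polyline.pt_mem_image _ le_rfl)
    · exact Set.pair_subset ⟨u, rfl⟩ ⟨v, rfl⟩
  · exact hQ e he ▸ hQ e' he' ▸ hinter ⟨e, he⟩ ⟨e', he'⟩ (mt (congrArg Subtype.val) hne)
  · exact hQ e he ▸ hbends _

namespace STGraph

variable {S : STGraph V G.edgeSet}

theorem Coords.exists_octiDrawing [Finite V] (hS : S.ends = Subtype.val) (C : S.Coords) :
    ∃ D : OctiDrawing G, D.IsPlanar ∧ ∀ e ∈ G.edgeSet, (D.poly e).bends ≤ 2 := by
  obtain ⟨Y, B, h⟩ := C.exists_isSpread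
  choose P h0 hlen hbends hocti hsimple himage using h.exists_polyline
  have hpos : Function.Injective fun v => (C.vertexX v, Y v) := fun v w hvw => by
    have hY : Y v = Y w := congrArg Prod.snd hvw
    refine h.eq_of_abs_sub_le (y := Y v) ?_ ?_ <;> simp [hY, h.nonneg]
  have hends : ∀ e : G.edgeSet, e.1 = s(S.src e, S.tgt e) := fun e => (congrFun hS e).symm
  refine exists_octiDrawing_of_polylines P hpos
    (fun e => ⟨S.src e, S.tgt e, hends e, h0 e, hlen e⟩) hbends hocti hsimple ?_ ?_
  · intro e w hw
    rw [hends e]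
    exact h.mem_ends_of_point_mem_curve (himage e hw)
  · intro e e' hne
    rw [hends e, hends e']
    exact (Set.inter_subset_inter (himage e) (himage e')).trans (h.curve_inter_curve hne)

theorem ncard_ends_le {k : ℕ} (hS : S.ends = Subtype.val) (hd : MaxDegLE G k) (v : V) :
    {e | v ∈ S.ends e}.ncard ≤ k := by
  have himage : Subtype.val '' {e | v ∈ S.ends e} = G.incidenceSet v := by
    rw [hS]
    ext e
    simp [SimpleGraph.incidenceSet, and_comm]
  classical
  rw [← Set.ncard_image_of_injective _ Subtype.val_injective, himage]
  exact (Nat.card_congr (G.incidenceSetEquivNeighborSet v)).trans_le (hd v)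

end STGraph

theorem IsSTNumberingOn.exists_stGraph {s t : V} {g : V → ℤ} (hg : IsSTNumberingOn G s t Set.univ g)
    (e₀ : G.edgeSet) (he₀ : e₀.1 = s(s, t)) :
    ∃ S : STGraph V G.edgeSet, S.ends = Subtype.val ∧ S.outer = e₀ := by
  have hinj : Function.Injective g := Set.injOn_univ.1 hg.injOn
  have hle : ∀ v, g s ≤ g v ∧ g v ≤ g t := fun v => hg.le v trivial
  have horient : ∀ e : G.edgeSet, ∃ u v, e.1 = s(u, v) ∧ g u < g v := by
    rintro ⟨e, he⟩
    induction e using Sym2.ind with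
    | _ u v =>
      rcases (hinj.ne (G.ne_of_adj he)).lt_or_gt with h | h
      exacts [⟨u, v, rfl, h⟩, ⟨v, u, Sym2.eq_swap, h⟩]
  choose src tgt hends hlt using horient
  have heq : ∀ (e : G.edgeSet) u v, e.1 = s(u, v) → g u < g v → src e = u ∧ tgt e = v := by
    intro e u v he huv
    rcases Sym2.eq_iff.1 ((hends e).symm.trans he) with h | ⟨hu, hv⟩
    · exact h
    · exact absurd (hlt e) (by rw [hu, hv]; exact huv.not_gt)
  have hst : g s < g t :=
    (hle t).1.lt_of_ne (hinj.ne (G.ne_of_adj (G.mem_edgeSet.1 (he₀ ▸ e₀.2))))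
  have hlevel : ∀ {v w}, (g v - g s).toNat < (g w - g s).toNat ↔ g v < g w := fun {v w} => by
    have := (hle v).1
    have := (hle w).1
    omega
  refine ⟨⟨src, tgt, fun v => (g v - g s).toNat, s, t, e₀, ?_, fun e => hlevel.2 (hlt e), ?_, ?_,
    (heq e₀ s t he₀ hst).1, (heq e₀ s t he₀ hst).2, fun v hv => ?_, fun v hv => ?_⟩,
    funext fun e => (hends e).symm, rfl⟩
  · intro v w hvw
    have := (hle v).1
    have := (hle w).1
    dsimp only at hvw
    exact hinj (by omega)
  · exact fun v => not_lt.1 fun h => (hlevel.1 h).not_ge (hle v).1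
  · exact fun v => not_lt.1 fun h => (hlevel.1 h).not_ge (hle v).2
  · obtain ⟨w, -, hadj, hlt⟩ := hg.exists_lt v trivial hv
    exact ⟨⟨s(w, v), hadj.symm⟩, (heq _ w v rfl hlt).2⟩
  · obtain ⟨w, -, hadj, hlt⟩ := hg.exists_gt v trivial hv
    exact ⟨⟨s(v, w), hadj⟩, (heq _ v w rfl hlt).1⟩

theorem Triconnected.connected [Fintype V] (h : Triconnected G) : G.Connected := by
  have hempty := h.2 ∅ (by simp)
  rw [Set.compl_empty] at hempty
  exact (SimpleGraph.induceUnivIso G).connected_iff.1 hempty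

end OctilinearDrawing

theorem octilinear_two_bends_of_triconnected_deg6_general {V : Type*} [Finite V]
    (G : SimpleGraph V) (hG : G.Connected) (hcut : ∀ v, (G.induce {v}ᶜ).Connected)
    (hp : GraphPlanar G) (hd : MaxDegLE G 6) :
    ∃ D : OctiDrawing G, D.IsPlanar ∧ ∀ e ∈ G.edgeSet, (D.poly e).bends ≤ 2 := by
  have := Fintype.ofFinite G.edgeSet
  obtain ⟨v⟩ := hG.nonempty
  obtain ⟨w, hw⟩ := (hcut v).nonempty
  have : Nontrivial V := ⟨w, v, hw⟩
  obtain ⟨u, hu⟩ := hG.preconnected.exists_adj_of_nontrivial v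
  have : Nonempty G.edgeSet := ⟨⟨s(v, u), hu⟩⟩
  obtain ⟨e₀, L, hL⟩ := hp.exists_localCrossings
  obtain ⟨s, t, hst⟩ : ∃ s t, e₀.1 = s(s, t) := Sym2.exists.1 ⟨e₀.1, rfl⟩
  obtain ⟨g, hg⟩ := exists_isSTNumberingOn_univ hG.preconnected (fun v => (hcut v).preconnected)
    (G.mem_edgeSet.1 (hst ▸ e₀.2))
  obtain ⟨S, hS, hS₀⟩ := hg.exists_stGraph e₀ hst
  obtain ⟨O⟩ := STGraph.nonempty_edgeOrder (S := S) (L := L) (by rwa [hS, hS₀])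
  obtain ⟨C⟩ := O.nonempty_coords (STGraph.ncard_ends_le hS hd)
  exact C.exists_octiDrawing hS

/-- Every triconnected planar simple graph with maximum degree at most `6`
admits a planar octilinear drawing in which every edge has at most two bends. -/
theorem octilinear_two_bends_of_triconnected_deg6 {V : Type*} [Fintype V]
    (G : SimpleGraph V) (h3 : Triconnected G) (hp : GraphPlanar G) (hd : MaxDegLE G 6) :
    ∃ D : OctiDrawing G, D.IsPlanar ∧ ∀ e ∈ G.edgeSet, (D.poly e).bends ≤ 2 :=
  octilinear_two_bends_of_triconnected_deg6_general G h3.connected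
    (fun v => h3.2 {v} (by simp)) hp hd
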